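/- arXiv:2303.05494 — 5 statements merged into one kernel-verified Lean document; each statement's English description precedes it below -/
import Mathlib

section
/- For all ε ∈ ℝ, all Schwartz functions f, g : ℝ² → ℂ, and every point (x,y) ∈ ℝ², the commutator semiclassical asymptotics hold and are independent of ε: lim_{ℏ → 0⁺} [ (f ⋆_{ℏ,ε} g)(x,y) − (g ⋆_{ℏ,ε} f)(x,y) ] / ℏ = −2i·{f,g}(x,y). -/
open MeasureTheory Complex Filter

/-- The ε-deformed kernel at base point `m = (x,y)`, on `a = (x'',y'')`, `b = (x',y')`:
`exp((i/ℏ)·[(x''−x)(y−y') − (y''−y)(x−x') + ε(y·y' − y'·y'' + y·y'' − y²)])`. -/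
noncomputable def epsKernel (ℏ ε : ℝ) (m a b : ℝ × ℝ) : ℂ :=
  Complex.exp (Complex.I / ℏ *
    (((a.1 - m.1) * (m.2 - b.2) - (a.2 - m.2) * (m.1 - b.1)
      + ε * (m.2 * b.2 - b.2 * a.2 + m.2 * a.2 - m.2 ^ 2) : ℝ) : ℂ))

/-- The ε-deformed product `(f ⋆_{ℏ,ε} g)(x,y)`. -/
noncomputable def moyalEps (ℏ ε : ℝ) (f g : ℝ × ℝ → ℂ) : ℝ × ℝ → ℂ :=
  fun m => ((2 * Real.pi * ℏ) ^ 2 : ℝ)⁻¹ •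
    ∫ ab : (ℝ × ℝ) × (ℝ × ℝ), f ab.1 * g ab.2 * epsKernel ℏ ε m ab.1 ab.2

/-- Partial derivative in the first (x) variable. -/
noncomputable def pderivX (f : ℝ × ℝ → ℂ) (m : ℝ × ℝ) : ℂ := fderiv ℝ f m (1, 0)

/-- Partial derivative in the second (y) variable. -/
noncomputable def pderivY (f : ℝ × ℝ → ℂ) (m : ℝ × ℝ) : ℂ := fderiv ℝ f m (0, 1)

/-- The Poisson bracket `{f,g} = ∂ₓf·∂_yg − ∂_yf·∂ₓg` on ℝ². -/
noncomputable def pbracket (f g : ℝ × ℝ → ℂ) (m : ℝ × ℝ) : ℂ :=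
  pderivX f m * pderivY g m - pderivY f m * pderivX g m

open scoped FourierTransform SchwartzMap LineDeriv in
theorem exists_fourier (g : SchwartzMap (ℝ × ℝ) ℂ) (m : ℝ × ℝ) :
    ∃ h : SchwartzMap (ℝ × ℝ) ℂ,
      (∀ ξ : ℝ × ℝ, h ξ = ∫ v : ℝ × ℝ,
        Complex.exp ((-2 * Real.pi * (v.1 * ξ.1 + v.2 * ξ.2) : ℝ) * Complex.I) * g (m + v)) ∧
      (∫ ξ, h ξ = g m) ∧
      (∀ c : ℝ × ℝ, ∫ ξ : ℝ × ℝ, 2 * Real.pi * Complex.I * ((c.1 * ξ.1 + c.2 * ξ.2 : ℝ) : ℂ) * h ξ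
        = fderiv ℝ g m c) := by
  let e : WithLp 2 (ℝ × ℝ) ≃L[ℝ] ℝ × ℝ := WithLp.prodContinuousLinearEquiv 2 ℝ ℝ ℝ
  have he : ∀ v, e v = WithLp.ofLp v := fun v => rfl
  have hmp : MeasurePreserving e := WithLp.volume_preserving_ofLp ℝ ℝ
  have hme : MeasurableEmbedding e := e.toHomeomorph.measurableEmbedding
  have hint : ∀ F : WithLp 2 (ℝ × ℝ) → ℂ, ∫ ξ : ℝ × ℝ, F (e.symm ξ) = ∫ v, F v := by
    intro F
    rw [← hmp.integral_comp hme]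
    simp
  let G : SchwartzMap (WithLp 2 (ℝ × ℝ)) ℂ :=
    SchwartzMap.compCLMOfContinuousLinearEquiv ℂ e (g.compSubConstCLM ℂ (-m))
  have hG : ∀ v, G v = g (m + e v) := by
    intro v
    simp [G, add_comm]
  have hinv : ∀ K : SchwartzMap (WithLp 2 (ℝ × ℝ)) ℂ, ∫ v, (𝓕 K) v = K 0 := by
    intro K
    have h1 : (𝓕⁻ (𝓕 K)) 0 = K 0 := by simp
    rw [← h1, SchwartzMap.fourierInv_coe, Real.fourierInv_eq']
    simp
  refine ⟨SchwartzMap.compCLMOfContinuousLinearEquiv ℂ e.symm (𝓕 G), ?_, ?_, ?_⟩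
  · intro ξ
    simp only [SchwartzMap.compCLMOfContinuousLinearEquiv_apply, Function.comp]
    rw [SchwartzMap.fourier_coe, Real.fourier_eq', ← hint]
    congr 1
    ext v
    rw [hG]
    simp [smul_eq_mul]
    left
    congr 1
    simp [e]
    ring
  · simp only [SchwartzMap.compCLMOfContinuousLinearEquiv_apply, Function.comp]
    rw [hint (fun v => 𝓕 G v), hinv, hG]
    simp
  · intro c
    have h1 := hinv (∂_{e.symm c} G)
    rw [SchwartzMap.fourier_lineDerivOp_eq] at h1
    have h2 : (∂_{e.symm c} G) 0 = fderiv ℝ g m c := by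
      rw [SchwartzMap.lineDerivOp_apply_eq_fderiv]
      have h3 : (G : WithLp 2 (ℝ × ℝ) → ℂ) = (g : ℝ × ℝ → ℂ) ∘ (fun v => m + e v) := by
        ext v; exact hG v
      have h4 : HasFDerivAt (fun v => m + e v) (e : WithLp 2 (ℝ × ℝ) →L[ℝ] ℝ × ℝ) 0 :=
        e.hasFDerivAt.const_add m
      have h5 : HasFDerivAt g (fderiv ℝ g m) (m + e 0) := by
        rw [map_zero, add_zero]
        exact g.differentiableAt.hasFDerivAt
      rw [h3, (HasFDerivAt.comp (f := fun v => m + e v) 0 h5 h4).fderiv]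
      simp
    rw [h2, ← hint] at h1
    rw [← h1]
    congr 1
    ext ξ
    simp only [SchwartzMap.compCLMOfContinuousLinearEquiv_apply, Function.comp]
    rw [smul_apply, SchwartzMap.smulLeftCLM_apply_apply (by fun_prop)]
    simp [e, smul_eq_mul]
    ring
theorem mp_shear (ε : ℝ) : MeasurePreserving (fun ξ : ℝ × ℝ => (ξ.2 + ε * ξ.1, -ξ.1)) := by
  have h1 : MeasurePreserving (fun ξ : ℝ × ℝ => (ξ.1, ε * ξ.1 + ξ.2)) := by
    refine MeasurePreserving.skew_product (μa := volume) (μc := volume) (f := id) (g := fun a b => ε * a + b) (MeasurePreserving.id _) (by fun_prop) ?_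
    refine Eventually.of_forall fun a => ?_
    exact (measurePreserving_add_left volume (ε * a)).map_eq
  have h2 : MeasurePreserving (Prod.swap : ℝ × ℝ → ℝ × ℝ) := Measure.measurePreserving_swap
  have h3 : MeasurePreserving (Prod.map id (fun x : ℝ => -x) : ℝ × ℝ → ℝ × ℝ) :=
    (MeasurePreserving.id volume).prod (Measure.measurePreserving_neg (volume : Measure ℝ))
  have := h3.comp (h2.comp h1)
  convert this using 1
  ext ξ <;> simp [add_comm]

theorem moyalEps_eq (ℏ ε : ℝ) (hℏ : 0 < ℏ) (f g h : SchwartzMap (ℝ × ℝ) ℂ) (m : ℝ × ℝ)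
    (hh : ∀ ξ : ℝ × ℝ, h ξ = ∫ v : ℝ × ℝ,
        Complex.exp ((-2 * Real.pi * (v.1 * ξ.1 + v.2 * ξ.2) : ℝ) * Complex.I) * g (m + v)) :
    moyalEps ℏ ε f g m =
      ∫ ξ : ℝ × ℝ, f (m + ℏ • (2 * Real.pi) • (ξ.2 + ε * ξ.1, -ξ.1)) * h ξ := by
  have hk : ∀ a b, ‖epsKernel ℏ ε m a b‖ = 1 := by
    intro a b
    unfold epsKernel
    rw [show Complex.I / ℏ = ((1 / ℏ : ℝ) : ℂ) * Complex.I by push_cast; ring,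
      mul_right_comm, ← Complex.ofReal_mul, Complex.norm_exp_ofReal_mul_I]
  have hint : Integrable (fun ab : (ℝ × ℝ) × (ℝ × ℝ) =>
      f ab.1 * g ab.2 * epsKernel ℏ ε m ab.1 ab.2) (volume.prod volume) := by
    have h1 : Integrable (fun ab : (ℝ × ℝ) × (ℝ × ℝ) => f ab.1 * g ab.2) (volume.prod volume) :=
      f.integrable.mul_prod g.integrable
    refine h1.mul_bdd (c := 1) ?_ (Eventually.of_forall fun x => (hk _ _).le)
    refine Continuous.aestronglyMeasurable ?_
    unfold epsKernel
    fun_prop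
  have hshear : MeasurableEmbedding (fun ξ : ℝ × ℝ => (ξ.2 + ε * ξ.1, -ξ.1)) := by
    refine Continuous.measurableEmbedding (by fun_prop) ?_
    rintro ⟨a, b⟩ ⟨c, d⟩ hab
    simp only [Prod.mk.injEq, neg_inj] at hab ⊢
    obtain ⟨h1, rfl⟩ := hab
    exact ⟨rfl, by linarith⟩
  have hpi := Real.pi_pos
  have key : ∀ ξ : ℝ × ℝ,
      (∫ b : ℝ × ℝ, g b * epsKernel ℏ ε m (m + ℏ • (2 * Real.pi) • (ξ.2 + ε * ξ.1, -ξ.1)) b) = h ξ := by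
    intro ξ
    rw [hh, ← integral_add_left_eq_self _ m]
    congr 1
    ext v
    rw [mul_comm]
    congr 1
    unfold epsKernel
    congr 1
    have : (ℏ : ℂ) ≠ 0 := by exact_mod_cast hℏ.ne'
    simp
    field_simp
    ring
  unfold moyalEps
  rw [show (volume : Measure ((ℝ × ℝ) × (ℝ × ℝ))) = volume.prod volume from rfl, integral_prod _ hint]
  simp_rw [mul_assoc, integral_const_mul]
  rw [← integral_add_left_eq_self _ m]
  have hs := Measure.integral_comp_smul (volume : Measure (ℝ × ℝ)) (fun u => f (m + u) *
    ∫ b : ℝ × ℝ, g b * epsKernel ℏ ε m (m + u) b) (2 * Real.pi * ℏ)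
  have hd : Module.finrank ℝ (ℝ × ℝ) = 2 := by simp
  rw [hd, abs_of_pos (by positivity)] at hs
  rw [← mul_assoc 2 Real.pi ℏ, ← hs, ← (mp_shear ε).integral_comp hshear]
  congr 1
  ext ξ
  have e1 : ∀ p : ℝ × ℝ, (2 * Real.pi * ℏ) • p = ℏ • (2 * Real.pi) • p := by
    intro p
    rw [smul_smul, mul_comm]
  simp only [e1, key]

theorem limit_one (ε : ℝ) (f h : SchwartzMap (ℝ × ℝ) ℂ) (m : ℝ × ℝ) :
    Tendsto (fun ℏ : ℝ => ((∫ ξ : ℝ × ℝ, f (m + ℏ • (2 * Real.pi) • (ξ.2 + ε * ξ.1, -ξ.1)) * h ξ)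
      - f m * ∫ ξ, h ξ) / (ℏ : ℂ)) (nhdsWithin 0 (Set.Ioi 0))
      (nhds (∫ ξ : ℝ × ℝ, fderiv ℝ f m ((2 * Real.pi) • (ξ.2 + ε * ξ.1, -ξ.1)) * h ξ)) := by
  obtain ⟨C, hC0, hC⟩ : ∃ C : ℝ, 0 ≤ C ∧ ∀ x y, ‖f x - f y‖ ≤ C * ‖x - y‖ := by
    obtain ⟨C, hC⟩ := f.decay 0 1
    have hC' : ∀ x, ‖fderiv ℝ f x‖ ≤ C := by
      intro x
      have := hC.2 x
      simpa [norm_iteratedFDeriv_one] using this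
    refine ⟨C, hC.1.le, fun x y => ?_⟩
    exact Convex.norm_image_sub_le_of_norm_fderiv_le (𝕜 := ℝ) (s := Set.univ)
      (fun x _ => f.differentiableAt) (fun x _ => hC' x) convex_univ (Set.mem_univ _) (Set.mem_univ _)
  have hA : ∀ ξ : ℝ × ℝ, ‖(2 * Real.pi) • ((ξ.2 + ε * ξ.1, -ξ.1) : ℝ × ℝ)‖
      ≤ 2 * Real.pi * ((1 + |ε|) * ‖ξ‖) := by
    intro ξ
    rw [norm_smul, Real.norm_of_nonneg (by positivity)]
    gcongr
    have h1 : |ξ.1| ≤ ‖ξ‖ := norm_fst_le ξ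
    have h2 : |ξ.2| ≤ ‖ξ‖ := norm_snd_le ξ
    have h3 : 0 ≤ |ε| * ‖ξ‖ := by positivity
    rw [Prod.norm_mk, max_le_iff, norm_neg, Real.norm_eq_abs, Real.norm_eq_abs]
    refine ⟨(abs_add_le _ _).trans ?_, by linarith⟩
    rw [abs_mul]
    nlinarith [mul_le_mul_of_nonneg_left h1 (abs_nonneg ε)]
  have hb : Integrable (fun ξ : ℝ × ℝ => C * (2 * Real.pi * (1 + |ε|)) * (‖ξ‖ ^ 1 * ‖h ξ‖)) :=
    (h.integrable_pow_mul volume 1).const_mul _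
  have hfi : ∀ ℏ : ℝ, Integrable (fun ξ : ℝ × ℝ =>
      f (m + ℏ • (2 * Real.pi) • (ξ.2 + ε * ξ.1, -ξ.1)) * h ξ) := by
    intro ℏ
    obtain ⟨B, hB⟩ := f.decay 0 0
    refine h.integrable.bdd_mul (c := B) ?_ (Eventually.of_forall fun x => ?_)
    · exact (f.continuous.comp (by fun_prop)).aestronglyMeasurable
    · simpa using hB.2 (m + ℏ • (2 * Real.pi) • (x.2 + ε * x.1, -x.1))
  have hD : Tendsto (fun ℏ : ℝ => ∫ ξ : ℝ × ℝ,
      ((f (m + ℏ • (2 * Real.pi) • (ξ.2 + ε * ξ.1, -ξ.1)) - f m) / (ℏ : ℂ)) * h ξ)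
      (nhdsWithin 0 (Set.Ioi 0))
      (nhds (∫ ξ : ℝ × ℝ, fderiv ℝ f m ((2 * Real.pi) • (ξ.2 + ε * ξ.1, -ξ.1)) * h ξ)) := by
    refine tendsto_integral_filter_of_dominated_convergence _ ?_ ?_ hb ?_
    · refine Eventually.of_forall fun ℏ => Continuous.aestronglyMeasurable ?_
      have hf := f.continuous
      have hh := h.continuous
      fun_prop
    · filter_upwards [self_mem_nhdsWithin] with ℏ hℏ
      have hℏ : 0 < ℏ := hℏ
      refine Eventually.of_forall fun ξ => ?_
      rw [norm_mul, norm_div, Complex.norm_real, Real.norm_of_nonneg hℏ.le, pow_one, ← mul_assoc]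
      gcongr
      rw [div_le_iff₀ hℏ]
      refine (hC _ _).trans ?_
      rw [add_sub_cancel_left, norm_smul, Real.norm_of_nonneg hℏ.le]
      calc C * (ℏ * _) ≤ C * (ℏ * (2 * Real.pi * ((1 + |ε|) * ‖ξ‖))) := by
            gcongr; exact hA ξ
        _ = _ := by ring
    · refine Eventually.of_forall fun ξ => Tendsto.mul_const _ ?_
      have h1 : HasFDerivAt f (fderiv ℝ f m) m := f.differentiableAt.hasFDerivAt
      have h2 := (h1.hasLineDerivAt ((2 * Real.pi) • (ξ.2 + ε * ξ.1, -ξ.1))).tendsto_slope_zero_right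
      refine h2.congr fun t => ?_
      simp [Complex.real_smul, div_eq_inv_mul]
  refine hD.congr' ?_
  filter_upwards [self_mem_nhdsWithin] with ℏ hℏ
  rw [← integral_const_mul, ← integral_sub (hfi ℏ) (h.integrable.const_mul _), ← integral_div]
  congr 1
  ext ξ
  ring

theorem limit_two (ε : ℝ) (f g : SchwartzMap (ℝ × ℝ) ℂ) (m : ℝ × ℝ) :
    Tendsto (fun ℏ : ℝ => (moyalEps ℏ ε f g m - f m * g m) / (ℏ : ℂ)) (nhdsWithin 0 (Set.Ioi 0))
      (nhds (-Complex.I * (pbracket f g m + ε * (pderivX f m * pderivX g m)))) := by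
  obtain ⟨h, h1, h2, h3⟩ := exists_fourier g m
  have hL := limit_one ε f h m
  rw [h2] at hL
  have hint : ∀ c : ℝ × ℝ, Integrable (fun ξ : ℝ × ℝ =>
      2 * Real.pi * Complex.I * ((c.1 * ξ.1 + c.2 * ξ.2 : ℝ) : ℂ) * h ξ) := by
    intro c
    refine ((h.integrable_pow_mul volume 1).const_mul (2 * Real.pi * (|c.1| + |c.2|))).mono' ?_ ?_
    · have hh := h.continuous
      exact Continuous.aestronglyMeasurable (by fun_prop)
    · refine Eventually.of_forall fun ξ => ?_
      have e1 : |ξ.1| ≤ ‖ξ‖ := norm_fst_le ξ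
      have e2 : |ξ.2| ≤ ‖ξ‖ := norm_snd_le ξ
      have e3 : |c.1 * ξ.1 + c.2 * ξ.2| ≤ (|c.1| + |c.2|) * ‖ξ‖ := by
        refine (abs_add_le _ _).trans ?_
        rw [abs_mul, abs_mul, add_mul]
        gcongr
      simp only [norm_mul, Complex.norm_real, Complex.norm_I, Real.norm_eq_abs,
        abs_of_pos Real.pi_pos, pow_one, mul_one, Complex.norm_ofNat]
      calc _ ≤ 2 * Real.pi * ((|c.1| + |c.2|) * ‖ξ‖) * ‖h ξ‖ := by gcongr
        _ = _ := by ring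
  have hval : (∫ ξ : ℝ × ℝ, fderiv ℝ f m ((2 * Real.pi) • (ξ.2 + ε * ξ.1, -ξ.1)) * h ξ)
      = -Complex.I * (pbracket f g m + ε * (pderivX f m * pderivX g m)) := by
    have hX := h3 (1, 0)
    have hY := h3 (0, 1)
    have iX := hint (1, 0)
    have iY := hint (0, 1)
    have hf : ∀ a b : ℝ, fderiv ℝ f m (a, b) = a * pderivX f m + b * pderivY f m := by
      intro a b
      have : ((a, b) : ℝ × ℝ) = a • (1, 0) + b • (0, 1) := by ext <;> simp
      rw [this, map_add, map_smul, map_smul]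
      simp [pderivX, pderivY]
    have hpt : ∀ ξ : ℝ × ℝ, fderiv ℝ f m ((2 * Real.pi) • (ξ.2 + ε * ξ.1, -ξ.1)) * h ξ =
        (-Complex.I * pderivX f m) *
          (2 * Real.pi * Complex.I * ((0 * ξ.1 + 1 * ξ.2 : ℝ) : ℂ) * h ξ) +
        (-Complex.I * (ε * pderivX f m - pderivY f m)) *
          (2 * Real.pi * Complex.I * ((1 * ξ.1 + 0 * ξ.2 : ℝ) : ℂ) * h ξ) := by
      intro ξ
      rw [Prod.smul_mk, hf]
      simp only [smul_eq_mul]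
      push_cast
      linear_combination (2 * Real.pi * h ξ * (ξ.2 * pderivX f m + (ε * pderivX f m - pderivY f m) * ξ.1)) * Complex.I_sq
    simp_rw [hpt]
    rw [integral_add (iY.const_mul _) (iX.const_mul _), integral_const_mul, integral_const_mul,
      hX, hY]
    simp only [pbracket, pderivX, pderivY]
    ring
  rw [hval] at hL
  refine hL.congr' ?_
  filter_upwards [self_mem_nhdsWithin] with ℏ hℏ
  rw [moyalEps_eq ℏ ε hℏ f g h m h1]

/-- Commutator semiclassical asymptotics of the ε-deformed product, independent of ε:
`lim_{ℏ → 0⁺} [(f ⋆_{ℏ,ε} g)(x,y) − (g ⋆_{ℏ,ε} f)(x,y)]/ℏ = −2i·{f,g}(x,y)`. -/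
theorem moyalEps_commutator (ε : ℝ) (f g : SchwartzMap (ℝ × ℝ) ℂ) (m : ℝ × ℝ) :
    Tendsto (fun ℏ : ℝ => (moyalEps ℏ ε (⇑f) (⇑g) m - moyalEps ℏ ε (⇑g) (⇑f) m) / (ℏ : ℂ))
      (nhdsWithin 0 (Set.Ioi 0))
      (nhds (-2 * Complex.I * pbracket (⇑f) (⇑g) m)) := by
  have h := (limit_two ε f g m).sub (limit_two ε g f m)
  convert h using 1
  · ext ℏ
    ring
  · congr 1
    simp only [pbracket]
    ring
end

section
/- For the quantized torus product, with f(θ₁,φ₁) = exp(iθ₁) and g(θ₂,φ₂) = exp(iφ₂), the limit defining (f ⋆_ℏ g)(θ,φ) exists for every (θ,φ) ∈ ℝ² and every ℏ > 0, and equals exp(iℏ)·exp(iθ)·exp(iφ). -/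
open MeasureTheory Complex Filter

/-- The torus kernel at base point `m = (θ,φ)`, on `a = (θ₁,φ₁)`, `b = (θ₂,φ₂)`:
`exp((i/ℏ)·[(θ−θ₂)(φ−φ₁) − (φ−φ₂)(θ−θ₁)])`. -/
noncomputable def torusKernel (ℏ : ℝ) (m a b : ℝ × ℝ) : ℂ :=
  Complex.exp (Complex.I / ℏ *
    (((m.1 - b.1) * (m.2 - a.2) - (m.2 - b.2) * (m.1 - a.1) : ℝ) : ℂ))

/-- The truncated torus product `T_n(f,g)(θ,φ)`, integrating over the box `[−2πn, 2πn]⁴`. -/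
noncomputable def torusT (ℏ : ℝ) (f g : ℝ × ℝ → ℂ) (n : ℕ) (m : ℝ × ℝ) : ℂ :=
  ((2 * Real.pi * ℏ) ^ 2 : ℝ)⁻¹ •
    ∫ ab in Set.Icc (-(2 * Real.pi * n), -(2 * Real.pi * n)) (2 * Real.pi * n, 2 * Real.pi * n)
        ×ˢ Set.Icc (-(2 * Real.pi * n), -(2 * Real.pi * n)) (2 * Real.pi * n, 2 * Real.pi * n),
      f ab.1 * g ab.2 * torusKernel ℏ m ab.1 ab.2

noncomputable def gg (u : ℝ) : ℂ := ∫ t in (0:ℝ)..1, Complex.exp (I * ((u * t : ℝ) : ℂ))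
noncomputable def GG (X : ℝ) : ℂ := ∫ u in (0:ℝ)..X, gg u
noncomputable def DD (X : ℝ) : ℂ :=
  ∫ α in (0:ℝ)..(Real.pi / 2), Complex.exp (I * X * Complex.exp (I * α))
noncomputable def DD' (X : ℝ) : ℂ :=
  ∫ α in (0:ℝ)..(Real.pi / 2), I * Complex.exp (I * α) * Complex.exp (I * X * Complex.exp (I * α))

lemma gg_continuous : Continuous gg := by
  unfold gg
  apply intervalIntegral.continuous_parametric_intervalIntegral_of_continuous'
  fun_prop

lemma GG_deriv (X : ℝ) : HasDerivAt GG (gg X) X := by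
  unfold GG
  exact intervalIntegral.integral_hasDerivAt_right (gg_continuous.intervalIntegrable _ _)
    (gg_continuous.stronglyMeasurableAtFilter _ _) gg_continuous.continuousAt

lemma gg_eq {X : ℝ} (hX : X ≠ 0) : gg X = (Complex.exp (I * X) - 1) / (I * X) := by
  unfold gg
  have h : (I * X : ℂ) ≠ 0 := mul_ne_zero I_ne_zero (by exact_mod_cast hX)
  have := integral_exp_mul_complex (a := 0) (b := 1) h
  simp only [ofReal_mul, ← mul_assoc]
  rw [this]; simp

lemma norm_ee (X α : ℝ) : ‖Complex.exp (I * X * Complex.exp (I * α))‖ = Real.exp (- X * Real.sin α) := by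
  rw [Complex.norm_exp]
  congr 1
  rw [mul_comm I (α : ℂ), Complex.exp_mul_I]
  simp [Complex.cos_ofReal_re, Complex.sin_ofReal_re]

lemma DD_deriv (X : ℝ) : HasDerivAt DD (DD' X) X := by
  unfold DD DD'
  refine (intervalIntegral.hasDerivAt_integral_of_dominated_loc_of_deriv_le
    (μ := volume) (F := fun (x : ℝ) (α : ℝ) => Complex.exp (I * x * Complex.exp (I * α)))
    (F' := fun (x : ℝ) (α : ℝ) => I * Complex.exp (I * α) * Complex.exp (I * x * Complex.exp (I * α)))
    (bound := fun _ => Real.exp (|X| + 1))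
    (Metric.ball_mem_nhds X one_pos) ?_ ?_ ?_ ?_ ?_ ?_).2
  · refine Eventually.of_forall fun x => ?_
    apply Continuous.aestronglyMeasurable; fun_prop
  · apply Continuous.intervalIntegrable; fun_prop
  · apply Continuous.aestronglyMeasurable; fun_prop
  · refine Eventually.of_forall fun α _ x hx => ?_
    rw [norm_mul, norm_ee]
    have : ‖I * Complex.exp (I * α)‖ = 1 := by
      rw [mul_comm I (α : ℂ), norm_mul, Complex.norm_exp_ofReal_mul_I]; simp
    rw [this, one_mul]
    apply Real.exp_le_exp.mpr
    have h1 : |x| ≤ |X| + 1 := by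
      rw [Metric.mem_ball, Real.dist_eq] at hx
      have := abs_sub_abs_le_abs_sub x X
      linarith
    calc -x * Real.sin α ≤ |(-x) * Real.sin α| := le_abs_self _
      _ = |x| * |Real.sin α| := by rw [abs_mul, abs_neg]
      _ ≤ |x| * 1 := by gcongr; exact Real.abs_sin_le_one α
      _ ≤ _ := by linarith
  · simp
  · refine Eventually.of_forall fun α _ x hx => ?_
    have h : HasDerivAt (fun x : ℝ => I * (x : ℂ) * Complex.exp (I * α)) (I * 1 * Complex.exp (I * α)) x :=
      ((Complex.ofRealCLM.hasDerivAt (x := x)).const_mul I).mul_const _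
    exact h.cexp.congr_deriv (by ring)

lemma DD'_eq {X : ℝ} (hX : X ≠ 0) :
    DD' X = I / X * (Complex.exp (I * X) - Complex.exp (-X)) := by
  unfold DD'
  have hX' : (X : ℂ) ≠ 0 := by exact_mod_cast hX
  have key : ∀ α ∈ Set.uIcc (0:ℝ) (Real.pi / 2), HasDerivAt
      (fun α : ℝ => -(I / X) * Complex.exp (I * X * Complex.exp (I * α)))
      (I * Complex.exp (I * α) * Complex.exp (I * X * Complex.exp (I * α))) α := by
    intro α _
    have h1 : HasDerivAt (fun α : ℝ => I * (α : ℂ)) (I * 1) α :=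
      (Complex.ofRealCLM.hasDerivAt (x := α)).const_mul I
    have := ((h1.cexp.const_mul (I * X)).cexp).const_mul (-(I / X))
    refine this.congr_deriv ?_
    field_simp
    ring_nf
    simp [show I ^ 3 = -I by simp [pow_succ]]
  rw [intervalIntegral.integral_eq_sub_of_hasDerivAt key
    (by apply Continuous.intervalIntegrable; fun_prop)]
  have : Complex.exp (I * ((Real.pi / 2 : ℝ) : ℂ)) = I := by
    rw [mul_comm]; push_cast; exact Complex.exp_pi_div_two_mul_I
  rw [this]
  have h2 : I * X * I = -(X : ℂ) := by linear_combination (X : ℂ) * I_mul_I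
  rw [h2]; simp; ring

lemma re_deriv_zero (X : ℝ) : (gg X + DD' X).re = 0 := by
  by_cases hX : X = 0
  · subst hX
    have hd : DD' 0 = I - 1 := by
      unfold DD'
      have : ∀ α ∈ Set.uIcc (0:ℝ) (Real.pi / 2), HasDerivAt
        (fun α : ℝ => Complex.exp (I * α))
        (I * Complex.exp (I * α) * Complex.exp (I * (0:ℝ) * Complex.exp (I * α))) α := by
        intro α _
        have h1 : HasDerivAt (fun α : ℝ => I * (α : ℂ)) (I * 1) α :=
          (Complex.ofRealCLM.hasDerivAt (x := α)).const_mul I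
        refine h1.cexp.congr_deriv ?_
        simp; ring
      rw [intervalIntegral.integral_eq_sub_of_hasDerivAt this
        (by apply Continuous.intervalIntegrable; fun_prop)]
      have : Complex.exp (I * ((Real.pi / 2 : ℝ) : ℂ)) = I := by
        rw [mul_comm]; push_cast; exact Complex.exp_pi_div_two_mul_I
      rw [this]; simp
    rw [hd]; simp [gg]
  · have hX' : (X : ℂ) ≠ 0 := by exact_mod_cast hX
    have : gg X + DD' X = (((1 - Real.exp (-X)) / X : ℝ) : ℂ) * I := by
      rw [gg_eq hX, DD'_eq hX]
      push_cast
      field_simp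
      ring_nf
      simp
      ring
    rw [this, Complex.re_ofReal_mul]; simp

lemma re_GG (X : ℝ) : (GG X).re = Real.pi / 2 - (DD X).re := by
  have hd : ∀ x, HasDerivAt (fun x => (GG x + DD x).re) 0 x := by
    intro x
    have := (Complex.reCLM.hasFDerivAt.comp_hasDerivAt x ((GG_deriv x).add (DD_deriv x)))
    rw [← re_deriv_zero x]
    exact this
  have := is_const_of_deriv_eq_zero (fun x => (hd x).differentiableAt) (fun x => (hd x).deriv) X 0
  simp [GG, DD] at this
  simp [GG, DD]
  linarith

lemma DD_tendsto : Tendsto DD atTop (nhds 0) := by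
  unfold DD
  have : (0:ℂ) = ∫ α in (0:ℝ)..(Real.pi / 2), (0:ℂ) := by simp
  rw [this]
  have hpi := Real.pi_pos
  apply intervalIntegral.tendsto_integral_filter_of_dominated_convergence (fun _ => (1:ℝ))
  · refine Eventually.of_forall fun x => ?_
    apply Continuous.aestronglyMeasurable; fun_prop
  · filter_upwards [eventually_ge_atTop 0] with x hx
    refine Eventually.of_forall fun α hα => ?_
    rw [Set.uIoc_of_le (by positivity)] at hα
    rw [norm_ee]
    apply Real.exp_le_one_iff.mpr
    have := Real.sin_nonneg_of_nonneg_of_le_pi hα.1.le (by linarith [hα.2])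
    nlinarith
  · simp
  · refine Eventually.of_forall fun α hα => ?_
    rw [Set.uIoc_of_le (by positivity)] at hα
    have hs := Real.sin_pos_of_pos_of_lt_pi hα.1 (by linarith [hα.2])
    rw [tendsto_zero_iff_norm_tendsto_zero]
    simp_rw [norm_ee]
    apply Real.tendsto_exp_atBot.comp
    simp_rw [neg_mul]
    exact tendsto_neg_atTop_atBot.comp (tendsto_id.atTop_mul_const hs)

noncomputable def HH (X : ℝ) : ℂ := GG X - I * (Real.log X : ℝ)

lemma HH_tendsto : ∃ C : ℂ, C.re = Real.pi / 2 ∧ Tendsto HH atTop (nhds C) := by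
  have hd : ∀ x ∈ Set.Ioi (1:ℝ), HasDerivAt (fun x => HH x + DD x)
      (-I * ((Real.exp (-x) / x : ℝ) : ℂ)) x := by
    intro x hx
    have hx0 : x ≠ 0 := (zero_lt_one.trans hx).ne'
    have hx' : (x : ℂ) ≠ 0 := by exact_mod_cast hx0
    have := ((GG_deriv x).sub (((Real.hasDerivAt_log hx0).ofReal_comp).const_mul I)).add (DD_deriv x)
    refine HasDerivAt.congr_deriv (show HasDerivAt (fun x => HH x + DD x) _ x from this) ?_
    rw [gg_eq hx0, DD'_eq hx0]
    push_cast
    field_simp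
    ring_nf
    simp
  have hint : IntegrableOn (fun x : ℝ => -I * ((Real.exp (-x) / x : ℝ) : ℂ)) (Set.Ioi 1) := by
    have h1 : IntegrableOn (fun x : ℝ => Real.exp (-x)) (Set.Ioi 1) := integrableOn_exp_neg_Ioi 1
    refine Integrable.mono' h1 ?_ ?_
    · apply Measurable.aestronglyMeasurable; fun_prop
    · refine (ae_restrict_iff' measurableSet_Ioi).mpr (Eventually.of_forall fun x hx => ?_)
      have hx' : (1:ℝ) < x := hx
      rw [norm_mul, norm_neg, norm_I, one_mul, Complex.norm_real, Real.norm_eq_abs,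
        abs_of_nonneg (by positivity)]
      exact div_le_self (Real.exp_pos _).le hx'.le
  have hlim := tendsto_limUnder_of_hasDerivAt_of_integrableOn_Ioi hd hint
  set C := limUnder atTop (fun x => HH x + DD x)
  have hC : Tendsto HH atTop (nhds C) := by
    have := hlim.sub DD_tendsto
    simpa using this
  refine ⟨C, ?_, hC⟩
  have h1 : Tendsto (fun x => (HH x).re) atTop (nhds C.re) := (Complex.continuous_re.tendsto C).comp hC
  have h2 : Tendsto (fun x => (HH x).re) atTop (nhds (Real.pi / 2)) := by
    have : (fun x => (HH x).re) = fun x => Real.pi / 2 - (DD x).re := by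
      ext x; simp [HH, re_GG]
    rw [this]
    have := ((Complex.continuous_re.tendsto 0).comp DD_tendsto).const_sub (Real.pi / 2)
    simpa using this
  exact tendsto_nhds_unique h1 h2

lemma gg_neg (x : ℝ) : gg (-x) = starRingEnd ℂ (gg x) := by
  unfold gg
  rw [← intervalIntegral.intervalIntegral_conj]
  congr 1; ext t
  rw [← Complex.exp_conj]; simp

lemma GG_neg (x : ℝ) : GG (-x) = - starRingEnd ℂ (GG x) := by
  unfold GG
  rw [← intervalIntegral.intervalIntegral_conj]
  simp_rw [← gg_neg]
  rw [intervalIntegral.integral_comp_neg, neg_zero, intervalIntegral.integral_symm]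

lemma HH_neg (x : ℝ) : HH (-x) = - starRingEnd ℂ (HH x) := by
  simp [HH, GG_neg, Real.log_neg_eq_log]
  ring

lemma box_integral {k : ℝ} (hk : k ≠ 0) (b d : ℝ) :
    ∫ s in (0:ℝ)..b, ∫ t in (0:ℝ)..d, Complex.exp (I * ((k * s * t : ℝ) : ℂ)) =
      (k:ℂ)⁻¹ * GG (k * (b * d)) := by
  by_cases hd : d = 0
  · subst hd; simp [GG]
  have h1 : ∀ s : ℝ, ∫ t in (0:ℝ)..d, Complex.exp (I * ((k * s * t : ℝ) : ℂ)) =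
      d * gg (k * d * s) := by
    intro s
    have := intervalIntegral.smul_integral_comp_mul_left (a := 0) (b := 1)
      (fun t => Complex.exp (I * ((k * s * t : ℝ) : ℂ))) d
    rw [mul_zero, mul_one] at this
    rw [← this, gg, Complex.real_smul]
    congr 2; ext t; congr 3; ring
  simp_rw [h1]
  rw [intervalIntegral.integral_const_mul]
  rw [intervalIntegral.integral_comp_mul_left gg (mul_ne_zero hk hd), mul_zero, Complex.real_smul,
    GG]
  have hd' : (d:ℂ) ≠ 0 := by exact_mod_cast hd
  have hk' : (k:ℂ) ≠ 0 := by exact_mod_cast hk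
  push_cast
  rw [show k * d * b = k * (b * d) by ring]
  field_simp

lemma box_integral4 {k : ℝ} (hk : k ≠ 0) (a b c d : ℝ) :
    ∫ s in a..b, ∫ t in c..d, Complex.exp (I * ((k * s * t : ℝ) : ℂ)) =
      (k:ℂ)⁻¹ * (GG (k * (b * d)) - GG (k * (a * d)) - GG (k * (b * c)) + GG (k * (a * c))) := by
  have hc : ∀ d : ℝ, Continuous fun s : ℝ => ∫ t in (0:ℝ)..d, Complex.exp (I * ((k * s * t : ℝ) : ℂ)) := by
    intro d
    apply intervalIntegral.continuous_parametric_intervalIntegral_of_continuous'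
    fun_prop
  have h1 : ∀ s : ℝ, ∫ t in c..d, Complex.exp (I * ((k * s * t : ℝ) : ℂ)) =
     (∫ t in (0:ℝ)..d, Complex.exp (I * ((k * s * t : ℝ) : ℂ))) -
      ∫ t in (0:ℝ)..c, Complex.exp (I * ((k * s * t : ℝ) : ℂ)) := by
    intro s
    rw [intervalIntegral.integral_interval_sub_left] <;>
    · apply Continuous.intervalIntegrable; fun_prop
  simp_rw [h1]
  rw [intervalIntegral.integral_sub ((hc d).intervalIntegrable _ _) ((hc c).intervalIntegrable _ _),
    ← intervalIntegral.integral_interval_sub_left ((hc d).intervalIntegrable 0 b) ((hc d).intervalIntegrable 0 a),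
    ← intervalIntegral.integral_interval_sub_left ((hc c).intervalIntegrable 0 b) ((hc c).intervalIntegrable 0 a)]
  simp_rw [box_integral hk]
  ring

lemma box_tendsto {k : ℝ} (hk : 0 < k) {a b c d : ℕ → ℝ} (ha : Tendsto a atTop atBot)
    (hb : Tendsto b atTop atTop) (hc : Tendsto c atTop atBot) (hd : Tendsto d atTop atTop) :
    Tendsto (fun n => ∫ s in a n..b n, ∫ t in c n..d n, Complex.exp (I * ((k * s * t : ℝ) : ℂ)))
      atTop (nhds (2 * Real.pi / k)) := by
  obtain ⟨C, hC, hH⟩ := HH_tendsto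
  have hH' : Tendsto HH atBot (nhds (- starRingEnd ℂ C)) := by
    have h := (((Complex.continuous_conj.tendsto C).comp hH).neg).comp tendsto_neg_atBot_atTop
    refine h.congr fun x => ?_
    have := HH_neg (-x)
    simp only [neg_neg] at this
    simp [this]
  have e1 := hH.comp ((hb.atTop_mul_atTop₀ hd).const_mul_atTop hk)
  have e2 := hH'.comp ((ha.atBot_mul_atTop₀ hd).const_mul_atBot hk)
  have e3 := hH'.comp ((hb.atTop_mul_atBot₀ hc).const_mul_atBot hk)
  have e4 := hH.comp ((ha.atBot_mul_atBot₀ hc).const_mul_atTop hk)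
  have e := (((e1.sub e2).sub e3).add e4).const_mul (k:ℂ)⁻¹
  have hl : (k:ℂ)⁻¹ * (C - -starRingEnd ℂ C - -starRingEnd ℂ C + C) = 2 * Real.pi / k := by
    have : C + starRingEnd ℂ C = Real.pi := by
      rw [Complex.add_conj, hC]; push_cast; ring
    linear_combination 2 * (k:ℂ)⁻¹ * this
  rw [hl] at e
  refine e.congr' ?_
  filter_upwards [ha.eventually_lt_atBot 0, hb.eventually_gt_atTop 0, hc.eventually_lt_atBot 0,
    hd.eventually_gt_atTop 0] with n h1 h2 h3 h4
  rw [box_integral4 hk.ne']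
  simp only [Function.comp, HH]
  rw [Real.log_mul hk.ne' (mul_ne_zero h2.ne' h4.ne'), Real.log_mul hk.ne' (mul_ne_zero h1.ne h4.ne'),
    Real.log_mul hk.ne' (mul_ne_zero h2.ne' h3.ne), Real.log_mul hk.ne' (mul_ne_zero h1.ne h3.ne),
    Real.log_mul h2.ne' h4.ne', Real.log_mul h1.ne h4.ne', Real.log_mul h2.ne' h3.ne,
    Real.log_mul h1.ne h3.ne]
  push_cast
  ring

lemma factor_integral (p q : ℝ → ℝ → ℂ) (hp : Continuous fun z : ℝ × ℝ => p z.1 z.2)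
    (hq : Continuous fun z : ℝ × ℝ => q z.1 z.2) {N : ℝ} (hN : -N ≤ N) :
    ∫ ab in Set.Icc ((-N, -N) : ℝ × ℝ) (N, N) ×ˢ Set.Icc ((-N, -N) : ℝ × ℝ) (N, N),
      p ab.1.2 ab.2.1 * q ab.1.1 ab.2.2 =
    (∫ y in (-N)..N, ∫ x in (-N)..N, p y x) * ∫ u in (-N)..N, ∫ v in (-N)..N, q u v := by
  have hint : IntegrableOn (fun ab : (ℝ × ℝ) × (ℝ × ℝ) => p ab.1.2 ab.2.1 * q ab.1.1 ab.2.2)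
      (Set.Icc ((-N, -N) : ℝ × ℝ) (N, N) ×ˢ Set.Icc ((-N, -N) : ℝ × ℝ) (N, N)) := by
    apply ContinuousOn.integrableOn_compact (isCompact_Icc.prod isCompact_Icc)
    apply Continuous.continuousOn
    exact (hp.comp (by fun_prop : Continuous fun ab : (ℝ × ℝ) × (ℝ × ℝ) => (ab.1.2, ab.2.1))).mul
      (hq.comp (by fun_prop : Continuous fun ab : (ℝ × ℝ) × (ℝ × ℝ) => (ab.1.1, ab.2.2)))
  rw [Measure.volume_eq_prod] at hint ⊢
  rw [setIntegral_prod _ hint]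
  simp only [← Set.Icc_prod_Icc]
  have h1 : ∀ a : ℝ × ℝ, ∫ b in Set.Icc (-N) N ×ˢ Set.Icc (-N) N, p a.2 b.1 * q a.1 b.2 =
      (∫ v in Set.Icc (-N) N, q a.1 v) * ∫ x in Set.Icc (-N) N, p a.2 x := by
    intro a
    rw [Measure.volume_eq_prod, setIntegral_prod_mul (fun x => p a.2 x) (fun v => q a.1 v), mul_comm]
  simp only [h1]
  rw [Measure.volume_eq_prod, setIntegral_prod_mul (fun u => ∫ v in Set.Icc (-N) N, q u v)
    (fun y => ∫ x in Set.Icc (-N) N, p y x), mul_comm]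
  simp only [intervalIntegral.integral_of_le hN, integral_Icc_eq_integral_Ioc]

/-- Quantized torus: with `f(θ₁,φ₁) = exp(iθ₁)` and `g(θ₂,φ₂) = exp(iφ₂)`, the limit
defining `(f ⋆_ℏ g)(θ,φ)` exists and equals `exp(iℏ)·exp(iθ)·exp(iφ)`. -/
theorem torus_product_theta_phi (ℏ : ℝ) (hℏ : 0 < ℏ) (θ φ : ℝ) :
    Tendsto (fun n : ℕ =>
        torusT ℏ (fun p => Complex.exp (Complex.I * (p.1 : ℂ)))
          (fun p => Complex.exp (Complex.I * (p.2 : ℂ))) n (θ, φ)) atTop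
      (nhds (Complex.exp (Complex.I * (ℏ : ℂ)) * Complex.exp (Complex.I * (θ : ℂ)) *
        Complex.exp (Complex.I * (φ : ℂ)))) := by
  have hpi := Real.pi_pos
  have hℏ' : (ℏ : ℂ) ≠ 0 := by exact_mod_cast hℏ.ne'
  have hpi' : (Real.pi : ℂ) ≠ 0 := by exact_mod_cast hpi.ne'
  have hN : Tendsto (fun n : ℕ => 2 * Real.pi * (n : ℝ)) atTop atTop :=
    tendsto_natCast_atTop_atTop.const_mul_atTop (by positivity)
  have hm : Tendsto (fun n : ℕ => -(2 * Real.pi * (n : ℝ))) atTop atBot :=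
    tendsto_neg_atTop_atBot.comp hN
  have hlo : ∀ c : ℝ, Tendsto (fun n : ℕ => c - 2 * Real.pi * (n : ℝ)) atTop atBot := fun c => by
    simpa [sub_eq_add_neg] using tendsto_atBot_add_const_left atTop c hm
  have hhi : ∀ c : ℝ, Tendsto (fun n : ℕ => c - -(2 * Real.pi * (n : ℝ))) atTop atTop := fun c => by
    simpa [sub_eq_add_neg] using tendsto_atTop_add_const_left atTop c hN
  have hlo' : ∀ c : ℝ, Tendsto (fun n : ℕ => -(2 * Real.pi * (n : ℝ)) - c) atTop atBot := fun c => by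
    simpa [sub_eq_add_neg] using tendsto_atBot_add_const_right atTop (-c) hm
  have hhi' : ∀ c : ℝ, Tendsto (fun n : ℕ => 2 * Real.pi * (n : ℝ) - c) atTop atTop := fun c => by
    simpa [sub_eq_add_neg] using tendsto_atTop_add_const_right atTop (-c) hN
  have hk : 0 < ℏ⁻¹ := inv_pos.mpr hℏ
  have tA := box_tendsto hk (hlo φ) (hhi φ) (hlo θ) (hhi θ)
  have tB := box_tendsto hk (hlo' (θ + ℏ)) (hhi' (θ + ℏ)) (hlo (φ + ℏ)) (hhi (φ + ℏ))
  have t := (tA.mul (tB.const_mul (Complex.exp (I * (ℏ + θ + φ))))).const_mul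
    (((2 * Real.pi * ℏ) ^ 2 : ℝ)⁻¹ : ℂ)
  have hl : (((2 * Real.pi * ℏ) ^ 2 : ℝ)⁻¹ : ℂ) * ((2 * Real.pi / (ℏ⁻¹ : ℝ)) *
      (Complex.exp (I * (ℏ + θ + φ)) * (2 * Real.pi / (ℏ⁻¹ : ℝ)))) =
      Complex.exp (Complex.I * (ℏ : ℂ)) * Complex.exp (Complex.I * (θ : ℂ)) *
        Complex.exp (Complex.I * (φ : ℂ)) := by
    rw [← Complex.exp_add, ← Complex.exp_add, ← mul_add, ← mul_add]
    push_cast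
    field_simp
  rw [hl] at t
  refine t.congr fun n => ?_
  have hle : -(2 * Real.pi * (n : ℝ)) ≤ 2 * Real.pi * n := by
    have : 0 ≤ 2 * Real.pi * (n : ℝ) := by positivity
    linarith
  unfold torusT
  have hfac := factor_integral
    (fun y x => Complex.exp (I * ((ℏ⁻¹ * (φ - y) * (θ - x) : ℝ) : ℂ)))
    (fun u v => Complex.exp (I * (ℏ + θ + φ)) *
      Complex.exp (I * ((ℏ⁻¹ * (u - (θ + ℏ)) * (φ + ℏ - v) : ℝ) : ℂ)))
    (by fun_prop) (by fun_prop) hle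
  have hintegrand : ∀ ab : (ℝ × ℝ) × (ℝ × ℝ),
      Complex.exp (Complex.I * (ab.1.1 : ℂ)) * Complex.exp (Complex.I * (ab.2.2 : ℂ)) *
        torusKernel ℏ (θ, φ) ab.1 ab.2 =
      Complex.exp (I * ((ℏ⁻¹ * (φ - ab.1.2) * (θ - ab.2.1) : ℝ) : ℂ)) *
      (Complex.exp (I * (ℏ + θ + φ)) *
      Complex.exp (I * ((ℏ⁻¹ * (ab.1.1 - (θ + ℏ)) * (φ + ℏ - ab.2.2) : ℝ) : ℂ))) := by
    intro ab
    unfold torusKernel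
    simp only [← Complex.exp_add]
    congr 1
    push_cast
    field_simp
    ring
  simp only [hintegrand]
  rw [hfac, Complex.real_smul]
  simp only [intervalIntegral.integral_const_mul]
  have eA : ∀ y : ℝ, ∫ x in (-(2 * Real.pi * (n : ℝ)))..(2 * Real.pi * n),
      Complex.exp (I * ((ℏ⁻¹ * (φ - y) * (θ - x) : ℝ) : ℂ)) =
      ∫ t in (θ - 2 * Real.pi * n)..(θ - -(2 * Real.pi * n)),
        Complex.exp (I * ((ℏ⁻¹ * (φ - y) * t : ℝ) : ℂ)) := fun y =>
    intervalIntegral.integral_comp_sub_left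
      (fun t => Complex.exp (I * ((ℏ⁻¹ * (φ - y) * t : ℝ) : ℂ))) θ
  have eB : ∀ u : ℝ, ∫ v in (-(2 * Real.pi * (n : ℝ)))..(2 * Real.pi * n),
      Complex.exp (I * ((ℏ⁻¹ * (u - (θ + ℏ)) * (φ + ℏ - v) : ℝ) : ℂ)) =
      ∫ t in (φ + ℏ - 2 * Real.pi * n)..(φ + ℏ - -(2 * Real.pi * n)),
        Complex.exp (I * ((ℏ⁻¹ * (u - (θ + ℏ)) * t : ℝ) : ℂ)) := fun u =>
    intervalIntegral.integral_comp_sub_left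
      (fun t => Complex.exp (I * ((ℏ⁻¹ * (u - (θ + ℏ)) * t : ℝ) : ℂ))) (φ + ℏ)
  simp only [eA, eB]
  rw [intervalIntegral.integral_comp_sub_left (fun s =>
      ∫ t in (θ - 2 * Real.pi * n)..(θ - -(2 * Real.pi * n)),
        Complex.exp (I * ((ℏ⁻¹ * s * t : ℝ) : ℂ))) φ,
    intervalIntegral.integral_comp_sub_right (fun s =>
      ∫ t in (φ + ℏ - 2 * Real.pi * n)..(φ + ℏ - -(2 * Real.pi * n)),
        Complex.exp (I * ((ℏ⁻¹ * s * t : ℝ) : ℂ))) (θ + ℏ)]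
  push_cast
  rfl
end

section
/- For every nondegenerate antisymmetric bilinear form B on ℝ^{2n} and every nonzero real constant c, the product ⋆ maps pairs of Schwartz functions to Schwartz functions and is associative: for all Schwartz f, g, h : ℝ^{2n} → ℂ, (f ⋆ g) ⋆ h = f ⋆ (g ⋆ h). -/
open MeasureTheory Complex Filter

/-- The product associated to a bilinear form `B` on a Euclidean space and a constant `c`:
`(f ⋆ g)(m) = c⁻¹ ∫ f(x) g(y) exp(i·B(x−m, y−m)) dx dy`. -/
noncomputable def bilinStar {d : ℕ}
    (B : EuclideanSpace ℝ (Fin d) →ₗ[ℝ] EuclideanSpace ℝ (Fin d) →ₗ[ℝ] ℝ) (c : ℝ)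
    (f g : EuclideanSpace ℝ (Fin d) → ℂ) : EuclideanSpace ℝ (Fin d) → ℂ :=
  fun m => ((c : ℂ))⁻¹ *
    ∫ xy : EuclideanSpace ℝ (Fin d) × EuclideanSpace ℝ (Fin d),
      f xy.1 * g xy.2 * Complex.exp (Complex.I * ((B (xy.1 - m) (xy.2 - m) : ℝ) : ℂ))


open scoped SchwartzMap FourierTransform

lemma bs_iter_exp (n : ℕ) : iteratedDeriv n (fun t : ℝ => Complex.exp (Complex.I * (t : ℂ)))
    = fun t : ℝ => Complex.I ^ n * Complex.exp (Complex.I * (t : ℂ)) := by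
  induction n with
  | zero => simp
  | succ n ih =>
    rw [iteratedDeriv_succ, ih]
    funext t
    have h1 : HasDerivAt (fun t : ℝ => Complex.I * (t : ℂ)) (Complex.I * 1) t :=
      (Complex.ofRealCLM.hasDerivAt (x := t)).const_mul Complex.I
    have := ((h1.cexp).const_mul (Complex.I ^ n)).deriv
    rw [this]; ring

lemma bs_norm_exp (t : ℝ) : ‖Complex.exp (Complex.I * (t : ℂ))‖ = 1 := by
  rw [mul_comm]; exact Complex.norm_exp_ofReal_mul_I t

lemma bs_exp_temperate :
    Function.HasTemperateGrowth (fun t : ℝ => Complex.exp (Complex.I * (t : ℂ))) := by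
  refine ⟨?_, fun n => ⟨0, 1, fun t => ?_⟩⟩
  · exact (contDiff_const.mul Complex.ofRealCLM.contDiff).cexp
  · rw [norm_iteratedFDeriv_eq_norm_iteratedDeriv, bs_iter_exp]
    simp

lemma bs_decay {E : Type*} [NormedAddCommGroup E] [NormedSpace ℝ E] (f : 𝓢(E, ℂ)) (k i : ℕ) :
    ∃ C : ℝ, 0 ≤ C ∧ ∀ x, (1 + ‖x‖) ^ k * ‖iteratedFDeriv ℝ i f x‖ ≤ C := by
  refine ⟨_, ?_, fun x => SchwartzMap.one_add_le_sup_seminorm_apply (𝕜 := ℝ) (m := (k, i))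
    le_rfl le_rfl f x⟩
  exact le_trans (by positivity) (SchwartzMap.one_add_le_sup_seminorm_apply (𝕜 := ℝ) (m := (k, i))
    le_rfl le_rfl f 0)

lemma bs_norm_comp {E W : Type*} [NormedAddCommGroup E] [NormedSpace ℝ E]
    [NormedAddCommGroup W] [NormedSpace ℝ W] (f : 𝓢(E, ℂ)) (p : W →L[ℝ] E) (i : ℕ) (z : W) :
    ‖iteratedFDeriv ℝ i (fun z => f (p z)) z‖ ≤ ‖iteratedFDeriv ℝ i f (p z)‖ * ‖p‖ ^ i := by
  have := p.iteratedFDeriv_comp_right (f := f) (f.smooth ⊤) z (i := i) (by exact_mod_cast le_top)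
  have h2 : (fun z => f (p z)) = f ∘ p := rfl
  rw [h2, this]
  refine (ContinuousMultilinearMap.norm_compContinuousLinearMap_le _ _).trans ?_
  simp

lemma bs_tensor {E W : Type*} [NormedAddCommGroup E] [NormedSpace ℝ E]
    [NormedAddCommGroup W] [NormedSpace ℝ W] (f g : 𝓢(E, ℂ)) (p q : W →L[ℝ] E)
    (h : ∀ z, ‖z‖ ≤ ‖p z‖ + ‖q z‖) :
    ∃ F : 𝓢(W, ℂ), ∀ z, F z = f (p z) * g (q z) := by
  have hf : ContDiff ℝ (⊤ : ℕ∞) (fun z => f (p z)) := (f.smooth ⊤).comp p.contDiff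
  have hg : ContDiff ℝ (⊤ : ℕ∞) (fun z => g (q z)) := (g.smooth ⊤).comp q.contDiff
  refine ⟨⟨fun z => f (p z) * g (q z), hf.mul hg, ?_⟩, fun z => rfl⟩
  intro k n
  choose Cf hCf0 hCf using fun i => bs_decay f k i
  choose Cg hCg0 hCg using fun i => bs_decay g k i
  refine ⟨∑ i ∈ Finset.range (n + 1), (n.choose i : ℝ) *
    (Cf i * ‖p‖ ^ i) * (Cg (n - i) * ‖q‖ ^ (n - i)), fun z => ?_⟩
  have hz : ‖z‖ ^ k ≤ (1 + ‖p z‖) ^ k * (1 + ‖q z‖) ^ k := by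
    rw [← mul_pow]
    refine pow_le_pow_left₀ (norm_nonneg _) ((h z).trans ?_) k
    nlinarith [norm_nonneg (p z), norm_nonneg (q z), mul_nonneg (norm_nonneg (p z)) (norm_nonneg (q z))]
  have hm := norm_iteratedFDeriv_mul_le (𝕜 := ℝ) hf hg z (n := n) (by exact_mod_cast le_top)
  calc _ ≤ ((1 + ‖p z‖) ^ k * (1 + ‖q z‖) ^ k) * _ :=
        mul_le_mul hz hm (norm_nonneg _) (by positivity)
    _ ≤ _ := by
        rw [Finset.mul_sum]
        refine Finset.sum_le_sum fun i _ => ?_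
        have h1 : (1 + ‖p z‖) ^ k * ‖iteratedFDeriv ℝ i (fun z => f (p z)) z‖ ≤ Cf i * ‖p‖ ^ i := by
          refine (mul_le_mul_of_nonneg_left (bs_norm_comp f p i z) (by positivity)).trans ?_
          rw [← mul_assoc]
          exact mul_le_mul_of_nonneg_right (hCf i _) (by positivity)
        have h2 : (1 + ‖q z‖) ^ k * ‖iteratedFDeriv ℝ (n - i) (fun z => g (q z)) z‖
            ≤ Cg (n - i) * ‖q‖ ^ (n - i) := by
          refine (mul_le_mul_of_nonneg_left (bs_norm_comp g q (n - i) z) (by positivity)).trans ?_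
          rw [← mul_assoc]
          exact mul_le_mul_of_nonneg_right (hCg (n - i) _) (by positivity)
        have h3 := mul_le_mul h1 h2 (by positivity) (mul_nonneg (hCf0 i) (by positivity))
        have h4 := mul_le_mul_of_nonneg_left h3 (Nat.cast_nonneg (α := ℝ) (n.choose i))
        refine le_trans (le_of_eq ?_) (h4.trans (le_of_eq ?_)) <;> ring

lemma bs_expmul {W : Type*} [NormedAddCommGroup W] [NormedSpace ℝ W] (f : 𝓢(W, ℂ)) (φ : W → ℝ)
    (hφ : φ.HasTemperateGrowth) :
    ∃ F : 𝓢(W, ℂ), ∀ z, F z = f z * Complex.exp (Complex.I * (φ z : ℂ)) := by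
  have : Function.HasTemperateGrowth (fun z => Complex.exp (Complex.I * (φ z : ℂ))) :=
    bs_exp_temperate.comp hφ
  refine ⟨SchwartzMap.smulLeftCLM ℂ (fun z => Complex.exp (Complex.I * (φ z : ℂ))) f, fun z => ?_⟩
  rw [SchwartzMap.smulLeftCLM_apply_apply this, smul_eq_mul, mul_comm]

lemma bs_exists_A {d : ℕ}
    (B : EuclideanSpace ℝ (Fin d) →ₗ[ℝ] EuclideanSpace ℝ (Fin d) →ₗ[ℝ] ℝ)
    (hB : ∀ x, (∀ y, B x y = 0) → x = 0) :
    ∃ A : EuclideanSpace ℝ (Fin d) ≃L[ℝ] EuclideanSpace ℝ (Fin d),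
      ∀ p z, B p z = -2 * Real.pi * inner ℝ z (A p) := by
  let A0 : EuclideanSpace ℝ (Fin d) →ₗ[ℝ] EuclideanSpace ℝ (Fin d) :=
    (-(2 * Real.pi)⁻¹) • ((InnerProductSpace.toDual ℝ (EuclideanSpace ℝ (Fin d))).symm.toLinearEquiv.toLinearMap ∘ₗ
      (LinearMap.toContinuousLinearMap : (EuclideanSpace ℝ (Fin d) →ₗ[ℝ] ℝ) ≃ₗ[ℝ] _).toLinearMap ∘ₗ B)
  have hA0 : ∀ p z, B p z = -2 * Real.pi * inner ℝ z (A0 p) := by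
    intro p z
    have hpi := Real.pi_ne_zero
    simp only [A0, LinearMap.smul_apply, inner_smul_right, LinearMap.comp_apply]
    rw [real_inner_comm]
    have : inner ℝ ((InnerProductSpace.toDual ℝ (EuclideanSpace ℝ (Fin d))).symm
      (LinearMap.toContinuousLinearMap (B p))) z = B p z := by
      rw [InnerProductSpace.toDual_symm_apply]; rfl
    erw [this]
    field_simp
  have hinj : Function.Injective A0 := by
    rw [← LinearMap.ker_eq_bot, LinearMap.ker_eq_bot']
    intro p hp
    refine hB p fun z => ?_
    rw [hA0, hp]; simp
  exact ⟨(LinearEquiv.ofInjectiveEndo A0 hinj).toContinuousLinearEquiv, hA0⟩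

lemma bs_schwartz {d : ℕ}
    (B : EuclideanSpace ℝ (Fin d) →ₗ[ℝ] EuclideanSpace ℝ (Fin d) →ₗ[ℝ] ℝ)
    (hanti : ∀ x y, B x y = -B y x)
    (hB : ∀ x, (∀ y, B x y = 0) → x = 0) (c : ℝ)
    (f g : 𝓢(EuclideanSpace ℝ (Fin d), ℂ)) :
    ∃ F : 𝓢(EuclideanSpace ℝ (Fin d), ℂ), ⇑F = bilinStar B c f g := by
  obtain ⟨A, hA⟩ := bs_exists_A B hB
  let E := EuclideanSpace ℝ (Fin d)
  let W := WithLp 2 (E × E)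
  let T : W →L[ℝ] E × E := (WithLp.prodContinuousLinearEquiv 2 ℝ E E).toContinuousLinearMap
  let T' : E × E →L[ℝ] W := (WithLp.prodContinuousLinearEquiv 2 ℝ E E).symm.toContinuousLinearMap
  let p : W →L[ℝ] E := (ContinuousLinearMap.fst ℝ E E).comp T
  let q : W →L[ℝ] E := (ContinuousLinearMap.snd ℝ E E).comp T
  have hnorm : ∀ z : W, ‖z‖ ^ 2 = ‖p z‖ ^ 2 + ‖q z‖ ^ 2 := fun z => WithLp.prod_norm_sq_eq_of_L2 z
  obtain ⟨H0, hH0⟩ := bs_tensor f g p q (fun z => by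
    have := hnorm z
    refine abs_le_of_sq_le_sq' ?_ (by positivity) |>.2
    nlinarith [norm_nonneg (p z), norm_nonneg (q z), mul_nonneg (norm_nonneg (p z)) (norm_nonneg (q z))])
  let Bc : E →L[ℝ] E →L[ℝ] ℝ :=
    LinearMap.toContinuousLinearMap (LinearMap.toContinuousLinearMap.toLinearMap ∘ₗ B)
  have hBc : ∀ x y, Bc x y = B x y := fun x y => rfl
  obtain ⟨H, hH⟩ := bs_expmul H0 (fun z => Bc (p z) (q z))
    (Bc.bilinear_hasTemperateGrowth p.hasTemperateGrowth q.hasTemperateGrowth)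
  let L : E →L[ℝ] W := T'.comp (A.toContinuousLinearMap.prod (-A.toContinuousLinearMap))
  have hpL : ∀ m, p (L m) = A m := fun m => rfl
  have hqL : ∀ m, q (L m) = - A m := fun m => rfl
  have hinner : ∀ z w : W, inner ℝ z w = inner ℝ (p z) (p w) + inner ℝ (q z) (q w) :=
    fun z w => WithLp.prod_inner_apply z w
  refine ⟨((c : ℂ)⁻¹) • SchwartzMap.compCLM ℂ (g := L) L.hasTemperateGrowth
    ⟨1, ‖A.symm.toContinuousLinearMap‖, fun m => ?_⟩ (𝓕 H), ?_⟩
  · have h1 : ‖m‖ ≤ ‖A.symm.toContinuousLinearMap‖ * ‖A m‖ := by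
      simpa using A.symm.toContinuousLinearMap.le_opNorm (A m)
    refine h1.trans (mul_le_mul_of_nonneg_left ?_ (norm_nonneg _))
    have := hnorm (L m)
    rw [hpL, hqL] at this
    have : ‖A m‖ ≤ ‖L m‖ := abs_le_of_sq_le_sq' (by nlinarith [sq_nonneg ‖-A m‖]) (by positivity) |>.2
    linarith
  · funext m
    simp only [bilinStar]
    rw [smul_apply, SchwartzMap.compCLM_apply, Function.comp_apply, smul_eq_mul,
      SchwartzMap.fourier_coe, Real.fourier_eq']
    congr 1
    have hmp : MeasurePreserving (WithLp.ofLp : W → E × E) := WithLp.volume_preserving_ofLp E E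
    have hme : MeasurableEmbedding (WithLp.ofLp : W → E × E) :=
      (MeasurableEquiv.toLp 2 (E × E)).symm.measurableEmbedding
    rw [← hmp.integral_comp hme]
    congr 1
    funext z
    rw [hH, hH0, hinner, hpL, hqL, smul_eq_mul, hBc]
    change _ = f (p z) * g (q z) * Complex.exp (Complex.I * ((B (p z - m) (q z - m) : ℝ) : ℂ))
    have key : B (p z - m) (q z - m) =
        B (p z) (q z) + (-2 * Real.pi * (inner ℝ (p z) (A m) + inner ℝ (q z) (-A m))) := by
      rw [inner_neg_right]
      have e1 := hA m (p z)
      have e2 := hA m (q z)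
      have e3 := hanti (p z) m
      have e4 := hanti m m
      simp only [map_sub, LinearMap.sub_apply]
      linarith
    rw [key, Complex.ofReal_add, mul_add Complex.I, Complex.exp_add,
      mul_comm (Complex.ofReal (-2 * _ * _))]
    ring

lemma bs_inversion {d : ℕ}
    (B : EuclideanSpace ℝ (Fin d) →ₗ[ℝ] EuclideanSpace ℝ (Fin d) →ₗ[ℝ] ℝ)
    (hB : ∀ x, (∀ y, B x y = 0) → x = 0) :
    ∃ κ : ℂ, ∀ u : 𝓢(EuclideanSpace ℝ (Fin d), ℂ),
      Integrable (fun p => ∫ z, u z * Complex.exp (Complex.I * (B p z : ℂ))) ∧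
      ∀ w, ∫ p, (∫ z, u z * Complex.exp (Complex.I * (B p z : ℂ))) *
        Complex.exp (Complex.I * (B p w : ℂ)) = κ * u (-w) := by
  obtain ⟨A, hA⟩ := bs_exists_A B hB
  let E := EuclideanSpace ℝ (Fin d)
  have hdet : LinearMap.det (A.toLinearEquiv : E →ₗ[ℝ] E) ≠ 0 := by
    exact (LinearEquiv.isUnit_det' A.toLinearEquiv).ne_zero
  refine ⟨((|(LinearMap.det (A.toLinearEquiv : E →ₗ[ℝ] E))⁻¹| : ℝ) : ℂ), fun u => ?_⟩
  have hK : ∀ p, ∫ z, u z * Complex.exp (Complex.I * (B p z : ℂ)) = (𝓕 u) (A p) := by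
    intro p
    rw [SchwartzMap.fourier_coe, Real.fourier_eq']
    congr 1
    funext z
    rw [hA, smul_eq_mul, mul_comm, mul_comm Complex.I]
  simp_rw [hK]
  constructor
  · exact (SchwartzMap.compCLMOfContinuousLinearEquiv ℂ A (𝓕 u)).integrable
  · intro w
    have hcv : ∀ G : E → ℂ, ∫ p, G (A p) =
        ((|(LinearMap.det (A.toLinearEquiv : E →ₗ[ℝ] E))⁻¹| : ℝ) : ℂ) * ∫ p, G p := by
      intro G
      have h1 := MeasureTheory.integral_map_equiv (μ := (volume : Measure E))
        A.toHomeomorph.toMeasurableEquiv G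
      have h2 := Measure.map_linearMap_addHaar_eq_smul_addHaar (volume : Measure E) hdet
      have h3 : Measure.map A.toHomeomorph.toMeasurableEquiv (volume : Measure E)
        = Measure.map (A.toLinearEquiv : E →ₗ[ℝ] E) volume := rfl
      rw [h3, h2, integral_smul_measure, ENNReal.toReal_ofReal (abs_nonneg _)] at h1
      rw [← Complex.real_smul]
      exact h1.symm
    have h4 := hcv (fun q => (𝓕 u) q * Complex.exp (Complex.I * ((-2 * Real.pi * inner ℝ w q : ℝ) : ℂ)))
    simp_rw [hA]
    rw [h4]
    congr 1
    have h5 : 𝓕⁻ (𝓕 u) = u := FourierTransform.fourierInv_fourier_eq u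
    conv_rhs => rw [← h5]
    rw [SchwartzMap.fourierInv_coe, Real.fourierInv_eq']
    congr 1
    funext q
    rw [smul_eq_mul, mul_comm, mul_comm Complex.I, inner_neg_right, real_inner_comm]
    congr 4
    ring

lemma bs_exp_integrable {α : Type*} [MeasurableSpace α] [TopologicalSpace α] [OpensMeasurableSpace α]
    {μ : Measure α} {F : α → ℂ} (hF : Integrable F μ) (φ : α → ℝ) (hφ : Continuous φ) :
    Integrable (fun x => F x * Complex.exp (Complex.I * (φ x : ℂ))) μ := by
  refine hF.mul_bdd (c := 1) ?_ (ae_of_all _ fun x => (bs_norm_exp _).le)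
  have : Continuous (fun x => Complex.exp (Complex.I * (φ x : ℂ))) := by fun_prop
  exact this.aestronglyMeasurable

lemma bs_cont {d : ℕ} {α : Type*} [TopologicalSpace α]
    (B : EuclideanSpace ℝ (Fin d) →ₗ[ℝ] EuclideanSpace ℝ (Fin d) →ₗ[ℝ] ℝ)
    {a b : α → EuclideanSpace ℝ (Fin d)} (ha : Continuous a) (hb : Continuous b) :
    Continuous (fun x => B (a x) (b x)) := by
  let Bc : EuclideanSpace ℝ (Fin d) →L[ℝ] EuclideanSpace ℝ (Fin d) →L[ℝ] ℝ :=
    LinearMap.toContinuousLinearMap (LinearMap.toContinuousLinearMap.toLinearMap ∘ₗ B)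
  have : Continuous (fun x => Bc (a x) (b x)) := by fun_prop
  exact this

lemma bs_starstar {d : ℕ}
    (B : EuclideanSpace ℝ (Fin d) →ₗ[ℝ] EuclideanSpace ℝ (Fin d) →ₗ[ℝ] ℝ)
    (hanti : ∀ x y, B x y = -B y x)
    (hB : ∀ x, (∀ y, B x y = 0) → x = 0) (c : ℝ) (κ : ℂ)
    (hκ : ∀ u : 𝓢(EuclideanSpace ℝ (Fin d), ℂ),
      Integrable (fun p => ∫ z, u z * Complex.exp (Complex.I * (B p z : ℂ))) ∧
      ∀ w, ∫ p, (∫ z, u z * Complex.exp (Complex.I * (B p z : ℂ))) *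
        Complex.exp (Complex.I * (B p w : ℂ)) = κ * u (-w))
    (f g h : 𝓢(EuclideanSpace ℝ (Fin d), ℂ)) (m : EuclideanSpace ℝ (Fin d)) :
    bilinStar B c (bilinStar B c f g) h m = (c : ℂ)⁻¹ * ((c : ℂ)⁻¹ * (κ *
      ∫ xy : EuclideanSpace ℝ (Fin d) × EuclideanSpace ℝ (Fin d),
        f xy.1 * g xy.2 * h (m + xy.2 - xy.1) *
          Complex.exp (Complex.I * ((B xy.1 xy.2 - B m (xy.2 - xy.1) : ℝ) : ℂ)))) := by
  let E := EuclideanSpace ℝ (Fin d)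
  have hself : ∀ x, B x x = 0 := fun x => by linarith [hanti x x]
  obtain ⟨F, hF⟩ := bs_schwartz B hanti hB c f g
  have hlin : Function.HasTemperateGrowth (fun z : E => -B m z) :=
    (LinearMap.toContinuousLinearMap (-(B m))).hasTemperateGrowth
  obtain ⟨u, hu⟩ := bs_expmul (SchwartzMap.compSubConstCLM ℂ (-m) h) (fun z => -B m z) hlin
  have hu' : ∀ z, u z = h (z + m) * Complex.exp (Complex.I * ((-B m z : ℝ) : ℂ)) := by
    intro z
    rw [hu, SchwartzMap.compSubConstCLM_apply, sub_neg_eq_add]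
  obtain ⟨hint, hinv⟩ := hκ u
  set K : E → ℂ := fun p => ∫ z, u z * Complex.exp (Complex.I * (B p z : ℂ)) with hKdef
  have hKz : ∀ p, ∫ z, h z * Complex.exp (Complex.I * ((B (p - m) (z - m) : ℝ) : ℂ)) = K p := by
    intro p
    rw [← integral_add_right_eq_self _ m]
    simp only [hKdef]
    congr 1
    funext z
    rw [hu', mul_assoc, ← Complex.exp_add, ← mul_add, ← Complex.ofReal_add]
    congr 4
    simp
    ring
  rw [← hF]
  have step1 : bilinStar B c F h m = (c : ℂ)⁻¹ * ∫ p, F p * K p := by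
    simp only [bilinStar]
    congr 1
    have hi := bs_exp_integrable (F.integrable (μ := (volume : Measure E)) |>.mul_prod
      (h.integrable (μ := (volume : Measure E))))
      (fun xy : E × E => B (xy.1 - m) (xy.2 - m)) (bs_cont B (by fun_prop) (by fun_prop))
    rw [Measure.volume_eq_prod, integral_prod _ hi]
    congr 1
    funext p
    rw [← hKz, ← integral_const_mul]
    congr 1
    funext z
    ring
  rw [step1]
  congr 1
  have step2 : ∫ p, F p * K p = (c : ℂ)⁻¹ * ∫ p, ∫ xy : E × E,
      K p * (f xy.1 * g xy.2) * Complex.exp (Complex.I * ((B (xy.1 - p) (xy.2 - p) : ℝ) : ℂ)) := by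
    rw [← integral_const_mul]
    congr 1
    funext p
    rw [hF]
    simp only [bilinStar]
    rw [mul_assoc, mul_comm _ (K p), ← integral_const_mul]
    congr 2
    funext z
    ring
  rw [step2]
  congr 1
  rw [integral_integral_swap, ← integral_const_mul]
  · congr 1
    funext xy
    obtain ⟨x, y⟩ := xy
    have h1 : ∀ p, K p * (f x * g y) * Complex.exp (Complex.I * ((B (x - p) (y - p) : ℝ) : ℂ))
        = (f x * g y * Complex.exp (Complex.I * ((B x y : ℝ) : ℂ))) *
          (K p * Complex.exp (Complex.I * ((B p (x - y) : ℝ) : ℂ))) := by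
      intro p
      have : B (x - p) (y - p) = B x y + B p (x - y) := by
        simp only [map_sub, LinearMap.sub_apply]
        linarith [hanti x p, hself p]
      rw [this, Complex.ofReal_add, mul_add, Complex.exp_add]
      ring
    simp only [h1]
    rw [integral_const_mul, hinv, hu', neg_sub, Complex.ofReal_sub, mul_sub, sub_eq_add_neg (Complex.I * _),
      Complex.exp_add, Complex.ofReal_neg, mul_neg, show y - x + m = m + y - x by abel]
    ring
  · have h2 := bs_exp_integrable (hint.mul_prod
      (f.integrable (μ := (volume : Measure E)) |>.mul_prod
      (g.integrable (μ := (volume : Measure E)))))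
      (fun q : E × E × E => B (q.2.1 - q.1) (q.2.2 - q.1)) (bs_cont B (by fun_prop) (by fun_prop))
    exact h2

lemma bs_swap {d : ℕ}
    (B : EuclideanSpace ℝ (Fin d) →ₗ[ℝ] EuclideanSpace ℝ (Fin d) →ₗ[ℝ] ℝ)
    (hanti : ∀ x y, B x y = -B y x) (c : ℝ) (f g : EuclideanSpace ℝ (Fin d) → ℂ) :
    bilinStar B c f g = bilinStar (-B) c g f := by
  funext m
  simp only [bilinStar]
  congr 1
  rw [Measure.volume_eq_prod, ← integral_prod_swap]
  congr 1
  funext z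
  simp only [Prod.fst_swap, Prod.snd_swap, LinearMap.neg_apply]
  rw [hanti (z.2 - m), mul_comm (f z.2)]

lemma bs_assoc {d : ℕ}
    (B : EuclideanSpace ℝ (Fin d) →ₗ[ℝ] EuclideanSpace ℝ (Fin d) →ₗ[ℝ] ℝ)
    (hanti : ∀ x y, B x y = -B y x)
    (hB : ∀ x, (∀ y, B x y = 0) → x = 0) (c : ℝ)
    (f g h : 𝓢(EuclideanSpace ℝ (Fin d), ℂ)) :
    bilinStar B c (bilinStar B c f g) h = bilinStar B c f (bilinStar B c g h) := by
  let E := EuclideanSpace ℝ (Fin d)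
  obtain ⟨κ, hκ⟩ := bs_inversion B hB
  have hself : ∀ x, B x x = 0 := fun x => by linarith [hanti x x]
  have hκ' : ∀ u : 𝓢(EuclideanSpace ℝ (Fin d), ℂ),
      Integrable (fun p => ∫ z, u z * Complex.exp (Complex.I * ((-B) p z : ℂ))) ∧
      ∀ w, ∫ p, (∫ z, u z * Complex.exp (Complex.I * ((-B) p z : ℂ))) *
        Complex.exp (Complex.I * ((-B) p w : ℂ)) = κ * u (-w) := by
    intro u
    obtain ⟨h1, h2⟩ := hκ u
    have e : ∀ p z, (-B) p z = B (-p) z := fun p z => by simp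
    refine ⟨?_, fun w => ?_⟩
    · simp only [e]
      exact h1.comp_neg
    · simp only [e]
      rw [← h2 w]
      exact integral_neg_eq_self (fun p => (∫ z, u z * Complex.exp (Complex.I * (B p z : ℂ))) *
        Complex.exp (Complex.I * (B p w : ℂ))) volume
  funext m
  rw [bs_swap B hanti c f (bilinStar B c g h), bs_swap B hanti c g h, bs_starstar B hanti hB c κ hκ,
    bs_starstar (-B) (fun x y => by simp [hanti x y]) (fun x hx => hB x fun y => by simpa using hx y)
      c κ hκ']
  congr 3
  have hint : ∀ (C : EuclideanSpace ℝ (Fin d) →ₗ[ℝ] EuclideanSpace ℝ (Fin d) →ₗ[ℝ] ℝ)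
      (a b k : 𝓢(EuclideanSpace ℝ (Fin d), ℂ)),
      Integrable (fun xy : E × E => a xy.1 * b xy.2 * k (m + xy.2 - xy.1) *
        Complex.exp (Complex.I * ((C xy.1 xy.2 - C m (xy.2 - xy.1) : ℝ) : ℂ)))
        ((volume : Measure E).prod volume) := by
    intro C a b k
    refine bs_exp_integrable ?_ (fun xy : E × E => C xy.1 xy.2 - C m (xy.2 - xy.1))
      ((bs_cont C (by fun_prop) (by fun_prop)).sub (bs_cont C (by fun_prop) (by fun_prop)))
    refine (a.integrable.mul_prod b.integrable).mul_bdd (c := SchwartzMap.seminorm ℝ 0 0 k) ?_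
      (ae_of_all _ fun x => SchwartzMap.norm_le_seminorm ℝ k _)
    have := k.continuous
    have : Continuous (fun xy : E × E => k (m + xy.2 - xy.1)) := by fun_prop
    exact this.aestronglyMeasurable
  rw [Measure.volume_eq_prod, integral_prod_symm _ (hint B f g h),
    integral_prod_symm _ (hint (-B) h g f)]
  congr 1
  funext y
  rw [← integral_sub_left_eq_self _ _ (m + y)]
  congr 1
  funext x
  simp only [sub_sub_cancel]
  have : (-B) x y - (-B) m (y - x) = B (m + y - x) y - B m (y - (m + y - x)) := by
    simp only [map_sub, map_add, LinearMap.sub_apply, LinearMap.add_apply, LinearMap.neg_apply]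
    linarith [hself y, hself m]
  rw [this]
  ring

/-- For every nondegenerate antisymmetric bilinear form  on ℝ^{2n} and every nonzero real
constant , the product ⋆ maps pairs of Schwartz functions to Schwartz functions and is
associative. -/
theorem bilinStar_schwartz_and_assoc (n : ℕ) (hn : 1 ≤ n)
    (B : EuclideanSpace ℝ (Fin (2 * n)) →ₗ[ℝ] EuclideanSpace ℝ (Fin (2 * n)) →ₗ[ℝ] ℝ)
    (hB_anti : ∀ x y, B x y = -B y x)
    (hB_nondeg : ∀ x, (∀ y, B x y = 0) → x = 0)
    (c : ℝ) (hc : c ≠ 0) :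
    (∀ f g : SchwartzMap (EuclideanSpace ℝ (Fin (2 * n))) ℂ,
      ∃ F : SchwartzMap (EuclideanSpace ℝ (Fin (2 * n))) ℂ, ⇑F = bilinStar B c (⇑f) (⇑g)) ∧
    (∀ f g h : SchwartzMap (EuclideanSpace ℝ (Fin (2 * n))) ℂ,
      bilinStar B c (bilinStar B c (⇑f) (⇑g)) (⇑h)
        = bilinStar B c (⇑f) (bilinStar B c (⇑g) (⇑h))) := by
  exact ⟨fun f g => bs_schwartz B hB_anti hB_nondeg c f g,
    fun f g h => bs_assoc B hB_anti hB_nondeg c f g h⟩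
end

section
/- For every ℏ > 0 and every fixed real z ≠ 0, the leafwise product ⋆_{ℏ,z} on the dual of the Heisenberg Lie algebra maps pairs of Schwartz functions to Schwartz functions and is associative: for all Schwartz f, g, h : ℝ² → ℂ, (f ⋆_{ℏ,z} g) ⋆_{ℏ,z} h = f ⋆_{ℏ,z} (g ⋆_{ℏ,z} h). -/
open MeasureTheory Complex Filter

/-- The leafwise Heisenberg-dual kernel at base point `m = (x,y)`, on `a = (x'',y'')`,
`b = (x',y')`: `exp((i/(zℏ))·[(x''−x)(y'−y) − (x'−x)(y''−y)])`. -/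
noncomputable def heisKernel (ℏ z : ℝ) (m a b : ℝ × ℝ) : ℂ :=
  Complex.exp (Complex.I / (z * ℏ) *
    (((a.1 - m.1) * (b.2 - m.2) - (b.1 - m.1) * (a.2 - m.2) : ℝ) : ℂ))

/-- The leafwise product on the symplectic leaf `{z = const}` of the dual of the Heisenberg
Lie algebra: `(f ⋆_{ℏ,z} g)(x,y) = (2πzℏ)⁻² ∫ f g · heisKernel`. -/
noncomputable def heisProd (ℏ z : ℝ) (f g : ℝ × ℝ → ℂ) : ℝ × ℝ → ℂ :=
  fun m => ((2 * Real.pi * z * ℏ) ^ 2 : ℝ)⁻¹ •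
    ∫ ab : (ℝ × ℝ) × (ℝ × ℝ), f ab.1 * g ab.2 * heisKernel ℏ z m ab.1 ab.2

/-- the unimodular exponential -/
noncomputable def hE (t : ℝ) : ℂ := Complex.exp ((t : ℂ) * Complex.I)

lemma hE_norm (t : ℝ) : ‖hE t‖ = 1 := Complex.norm_exp_ofReal_mul_I t

lemma hE_add (s t : ℝ) : hE (s + t) = hE s * hE t := by
  simp [hE, add_mul, Complex.exp_add]

lemma hE_hasDerivAt (t : ℝ) : HasDerivAt hE (Complex.I * hE t) t := by
  have h := ((Complex.ofRealCLM.hasDerivAt (x := t)).mul_const Complex.I).cexp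
  have e : (fun x : ℝ => Complex.exp (Complex.ofRealCLM x * Complex.I)) = hE := rfl
  rw [e] at h
  simpa [hE, mul_comm] using h

lemma hE_iter (n : ℕ) : iteratedDeriv n hE = fun t => Complex.I ^ n * hE t := by
  induction n with
  | zero => simp
  | succ n ih =>
    rw [iteratedDeriv_succ, ih]
    ext t
    rw [((hE_hasDerivAt t).const_mul _).deriv]
    ring

lemma hE_contDiff : ContDiff ℝ (⊤ : ℕ∞) hE := by
  unfold hE
  exact ((Complex.ofRealCLM.contDiff).mul contDiff_const).cexp

lemma hE_continuous : Continuous hE := hE_contDiff.continuous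

lemma hE_temperate : hE.HasTemperateGrowth := by
  refine ⟨hE_contDiff, fun n => ⟨0, 1, fun x => ?_⟩⟩
  rw [norm_iteratedFDeriv_eq_norm_iteratedDeriv, hE_iter]
  simp [hE_norm]

section tensor

variable {E W : Type} [NormedAddCommGroup E] [NormedSpace ℝ E] [NormedAddCommGroup W]
  [NormedSpace ℝ W]

lemma norm_iter_comp_le {f : E → ℂ} (hf : ContDiff ℝ (⊤ : ℕ∞) f) (L : W →L[ℝ] E) (hL : ‖L‖ ≤ 1)
    (n : ℕ) (x : W) : ‖iteratedFDeriv ℝ n (fun y => f (L y)) x‖ ≤ ‖iteratedFDeriv ℝ n f (L x)‖ := by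
  have h := L.iteratedFDeriv_comp_right hf x (i := n) (by exact_mod_cast le_top)
  have h2 : (fun y => f (L y)) = f ∘ L := rfl
  rw [h2, h]
  refine (ContinuousMultilinearMap.norm_compContinuousLinearMap_le _ _).trans ?_
  have : ∏ i : Fin n, ‖L‖ ≤ 1 := by
    simpa using pow_le_one₀ (norm_nonneg L) hL
  exact mul_le_of_le_one_right (norm_nonneg _) this

/-- exterior product of Schwartz functions -/
noncomputable def hTensor (f : SchwartzMap E ℂ) (g : SchwartzMap W ℂ) : SchwartzMap (E × W) ℂ where
  toFun p := f p.1 * g p.2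
  smooth' := ((f.smooth ⊤).comp contDiff_fst).mul ((g.smooth ⊤).comp contDiff_snd)
  decay' := by
    intro k n
    have hf : ContDiff ℝ (⊤ : ℕ∞) (fun p : E × W => f p.1) := (f.smooth ⊤).comp contDiff_fst
    have hg : ContDiff ℝ (⊤ : ℕ∞) (fun p : E × W => g p.2) := (g.smooth ⊤).comp contDiff_snd
    let S (k n : ℕ) := SchwartzMap.seminorm ℝ k n f
    let T (k n : ℕ) := SchwartzMap.seminorm ℝ k n g
    refine ⟨∑ i ∈ Finset.range (n + 1), (n.choose i : ℝ) *
      (S k i * T 0 (n - i) + S 0 i * T k (n - i)), fun p => ?_⟩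
    have h := norm_iteratedFDeriv_mul_le hf hg p (n := n) (by exact_mod_cast le_top)
    refine (mul_le_mul_of_nonneg_left h (by positivity)).trans ?_
    rw [Finset.mul_sum]
    refine Finset.sum_le_sum fun i _ => ?_
    have h1 := norm_iter_comp_le (f.smooth ⊤) (ContinuousLinearMap.fst ℝ E W)
      (ContinuousLinearMap.norm_fst_le ..) i p
    have h2 := norm_iter_comp_le (g.smooth ⊤) (ContinuousLinearMap.snd ℝ E W)
      (ContinuousLinearMap.norm_snd_le ..) (n - i) p
    simp only [ContinuousLinearMap.coe_fst', ContinuousLinearMap.coe_snd'] at h1 h2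
    have hp : ‖p‖ ^ k ≤ ‖p.1‖ ^ k + ‖p.2‖ ^ k := by
      rw [Prod.norm_def]
      have q1 : 0 ≤ ‖p.2‖ ^ k := by positivity
      have q2 : 0 ≤ ‖p.1‖ ^ k := by positivity
      rcases max_cases ‖p.1‖ ‖p.2‖ with h | h <;> rw [h.1] <;> linarith
    have a1 := f.le_seminorm ℝ k i p.1
    have a2 := g.le_seminorm ℝ k (n - i) p.2
    have b1 := f.le_seminorm ℝ 0 i p.1
    have b2 := g.le_seminorm ℝ 0 (n - i) p.2
    simp only [pow_zero, one_mul] at b1 b2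
    calc ‖p‖ ^ k * ((n.choose i : ℝ) * ‖iteratedFDeriv ℝ i (fun p : E × W => f p.1) p‖ *
          ‖iteratedFDeriv ℝ (n - i) (fun p : E × W => g p.2) p‖)
        ≤ (‖p.1‖ ^ k + ‖p.2‖ ^ k) * ((n.choose i : ℝ) * ‖iteratedFDeriv ℝ i f p.1‖ *
          ‖iteratedFDeriv ℝ (n - i) g p.2‖) := by gcongr
      _ = (n.choose i : ℝ) * ((‖p.1‖ ^ k * ‖iteratedFDeriv ℝ i f p.1‖) *
            ‖iteratedFDeriv ℝ (n - i) g p.2‖ + ‖iteratedFDeriv ℝ i f p.1‖ *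
            (‖p.2‖ ^ k * ‖iteratedFDeriv ℝ (n - i) g p.2‖)) := by ring
      _ ≤ _ := by
        have s1 : 0 ≤ S k i := apply_nonneg _ _
        have s2 : 0 ≤ S 0 i := apply_nonneg _ _
        gcongr

lemma hTensor_apply (f : SchwartzMap E ℂ) (g : SchwartzMap W ℂ) (p : E × W) :
    hTensor f g p = f p.1 * g p.2 := rfl

end tensor

section partialInt

set_option linter.unusedSectionVars false

variable {E W : Type} [NormedAddCommGroup E] [NormedSpace ℝ E] [NormedAddCommGroup W]
  [NormedSpace ℝ W] [MeasurableSpace W] [BorelSpace W] [SecondCountableTopology W]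
  (μ : Measure W) [μ.HasTemperateGrowth]

lemma partial_bound {F : Type} [NormedAddCommGroup F] [NormedSpace ℝ F]
    (G : SchwartzMap (E × W) F) (k : ℕ) : ∃ C : ℝ, 0 ≤ C ∧ ∀ m v,
      ‖m‖ ^ k * ‖G (m, v)‖ ≤ C * (1 + ‖v‖) ^ (-(μ.integrablePower : ℝ)) := by
  set N := μ.integrablePower
  refine ⟨2 ^ (k + N) * (Finset.Iic (k + N, 0)).sup
    (fun m => SchwartzMap.seminorm ℝ m.1 m.2) G, by positivity, fun m v => ?_⟩
  have h := SchwartzMap.one_add_le_sup_seminorm_apply (𝕜 := ℝ) (m := (k + N, 0)) (k := k + N)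
    (n := 0) le_rfl le_rfl G (m, v)
  rw [norm_iteratedFDeriv_zero] at h
  rw [Real.rpow_neg (by positivity), Real.rpow_natCast, ← div_eq_mul_inv,
    le_div_iff₀ (by positivity)]
  refine le_trans ?_ h
  have h1 : ‖m‖ ≤ 1 + ‖(m, v)‖ := (norm_fst_le (m, v)).trans (by simp)
  have h2 : 1 + ‖v‖ ≤ 1 + ‖(m, v)‖ := by gcongr; exact norm_snd_le (m, v)
  calc _ = ‖m‖ ^ k * (1 + ‖v‖) ^ N * ‖G (m, v)‖ := by ring
    _ ≤ (1 + ‖(m, v)‖) ^ k * (1 + ‖(m, v)‖) ^ N * ‖G (m, v)‖ := by gcongr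
    _ = _ := by rw [pow_add]

lemma partial_cont {F : Type} [NormedAddCommGroup F] [NormedSpace ℝ F]
    (G : SchwartzMap (E × W) F) (m : E) : Continuous (fun v => G (m, v)) :=
  G.continuous.comp (by fun_prop)

lemma partial_meas {F : Type} [NormedAddCommGroup F] [NormedSpace ℝ F]
    (G : SchwartzMap (E × W) F) (m : E) : AEStronglyMeasurable (fun v => G (m, v)) μ :=
  (partial_cont G m).aestronglyMeasurable

lemma partial_integrable {F : Type} [NormedAddCommGroup F] [NormedSpace ℝ F]
    (G : SchwartzMap (E × W) F) (m : E) : Integrable (fun v => G (m, v)) μ := by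
  obtain ⟨C, -, hC⟩ := partial_bound μ G 0
  refine ((Measure.integrable_pow_neg_integrablePower μ).const_mul C).mono'
    (partial_cont G m).aestronglyMeasurable (ae_of_all _ fun v => ?_)
  simpa using hC m v

/-- partial derivative as Schwartz map -/
noncomputable def partialD {F : Type} [NormedAddCommGroup F] [NormedSpace ℝ F]
    (G : SchwartzMap (E × W) F) : SchwartzMap (E × W) (E →L[ℝ] F) :=
  (SchwartzMap.fderivCLM ℝ (E × W) F G).postcompCLM
    ((ContinuousLinearMap.compL ℝ E (E × W) F).flip (ContinuousLinearMap.inl ℝ E W))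

lemma partialD_hasFDerivAt {F : Type} [NormedAddCommGroup F] [NormedSpace ℝ F]
    (G : SchwartzMap (E × W) F) (m : E) (v : W) :
    HasFDerivAt (fun x => G (x, v)) (partialD G (m, v)) m := by
  exact HasFDerivAt.comp (g := G) m (G.hasFDerivAt (m, v)) (hasFDerivAt_prodMk_left m v)

lemma partial_hasFDerivAt {F : Type} [NormedAddCommGroup F] [NormedSpace ℝ F] [CompleteSpace F]
    (G : SchwartzMap (E × W) F) (m : E) :
    HasFDerivAt (fun x => ∫ v, G (x, v) ∂μ) (∫ v, partialD G (m, v) ∂μ) m := by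
  obtain ⟨C, -, hC⟩ := partial_bound μ (partialD G) 0
  refine hasFDerivAt_integral_of_dominated_of_fderiv_le (F' := fun x v => partialD G (x, v))
    (bound := fun v => C * (1 + ‖v‖) ^ (-(μ.integrablePower : ℝ))) Filter.univ_mem
    (Filter.Eventually.of_forall fun x => partial_meas μ G x)
    (partial_integrable μ G m) (partial_meas μ (partialD G) m)
    (ae_of_all _ fun v x _ => by simpa using hC x v)
    ((Measure.integrable_pow_neg_integrablePower μ).const_mul C)
    (ae_of_all _ fun v x _ => partialD_hasFDerivAt G x v)

lemma partial_fderiv {F : Type} [NormedAddCommGroup F] [NormedSpace ℝ F] [CompleteSpace F]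
    (G : SchwartzMap (E × W) F) :
    fderiv ℝ (fun x => ∫ v, G (x, v) ∂μ) = fun m => ∫ v, partialD G (m, v) ∂μ :=
  funext fun m => (partial_hasFDerivAt μ G m).fderiv

lemma partial_contDiff (n : ℕ) : ∀ {F : Type} [NormedAddCommGroup F] [NormedSpace ℝ F]
    [CompleteSpace F] (G : SchwartzMap (E × W) F),
    ContDiff ℝ n (fun x => ∫ v, G (x, v) ∂μ) := by
  induction n with
  | zero =>
    intro F _ _ _ G
    exact contDiff_zero.2 (continuous_iff_continuousAt.2 fun m =>
      (partial_hasFDerivAt μ G m).continuousAt)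
  | succ n ih =>
    intro F _ _ _ G
    push_cast
    rw [contDiff_succ_iff_fderiv]
    refine ⟨fun m => (partial_hasFDerivAt μ G m).differentiableAt, by simp, ?_⟩
    rw [partial_fderiv]
    exact ih (partialD G)

lemma partial_decay (k n : ℕ) : ∀ {F : Type} [NormedAddCommGroup F] [NormedSpace ℝ F]
    [CompleteSpace F] (G : SchwartzMap (E × W) F),
    ∃ C : ℝ, ∀ m, ‖m‖ ^ k * ‖iteratedFDeriv ℝ n (fun x => ∫ v, G (x, v) ∂μ) m‖ ≤ C := by
  induction n with
  | zero =>
    intro F _ _ _ G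
    obtain ⟨C, hC0, hC⟩ := partial_bound μ G k
    refine ⟨∫ v, C * (1 + ‖v‖) ^ (-(μ.integrablePower : ℝ)) ∂μ, fun m => ?_⟩
    rw [norm_iteratedFDeriv_zero]
    calc _ ≤ ‖m‖ ^ k * ∫ v, ‖G (m, v)‖ ∂μ := by gcongr; exact norm_integral_le_integral_norm _
      _ = ∫ v, ‖m‖ ^ k * ‖G (m, v)‖ ∂μ := by rw [integral_const_mul]
      _ ≤ _ := integral_mono ((partial_integrable μ G m).norm.const_mul _)
          ((Measure.integrable_pow_neg_integrablePower μ).const_mul C) (hC m)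
  | succ n ih =>
    intro F _ _ _ G
    obtain ⟨C, hC⟩ := ih (partialD G)
    refine ⟨C, fun m => ?_⟩
    rw [← norm_iteratedFDeriv_fderiv, partial_fderiv]
    exact hC m

/-- partial integration of a Schwartz function -/
noncomputable def partialInt (G : SchwartzMap (E × W) ℂ) : SchwartzMap E ℂ where
  toFun m := ∫ v, G (m, v) ∂μ
  smooth' := contDiff_infty.2 fun n => partial_contDiff μ n G
  decay' k n := partial_decay μ k n G

lemma partialInt_apply (G : SchwartzMap (E × W) ℂ) (m : E) :
    partialInt μ G m = ∫ v, G (m, v) ∂μ := rfl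

end partialInt

section heis

/-- the symplectic form -/
def hOm (a b : ℝ × ℝ) : ℝ := a.1 * b.2 - b.1 * a.2

/-- symplectic Fourier transform -/
noncomputable def hSF (l : ℝ) (f : ℝ × ℝ → ℂ) (v : ℝ × ℝ) : ℂ := ∫ a, f a * hE (l * hOm a v)

/-- rotation and scaling identifying the symplectic with the Euclidean Fourier transform -/
noncomputable def hJ (c : ℝ) (hc : c ≠ 0) : (ℝ × ℝ) ≃L[ℝ] ℂ :=
  ContinuousLinearEquiv.equivOfInverse
    ((Complex.equivRealProdCLM.symm : (ℝ × ℝ) →L[ℝ] ℂ).comp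
      (((-c) • ContinuousLinearMap.snd ℝ ℝ ℝ).prod (c • ContinuousLinearMap.fst ℝ ℝ ℝ)))
    ((c⁻¹ • Complex.imCLM).prod ((-c⁻¹) • Complex.reCLM))
    (fun v => by ext <;> simp [hc])
    (fun w => by apply Complex.ext <;> simp [hc])

lemma hJ_re (c : ℝ) (hc : c ≠ 0) (v : ℝ × ℝ) : (hJ c hc v).re = -c * v.2 := by
  simp [hJ]

lemma hJ_im (c : ℝ) (hc : c ≠ 0) (v : ℝ × ℝ) : (hJ c hc v).im = c * v.1 := by
  simp [hJ]

open FourierTransform in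
/-- symplectic Fourier transform on Schwartz functions -/
noncomputable def hSFS (l : ℝ) (hl : l / (2 * Real.pi) ≠ 0) (f : SchwartzMap (ℝ × ℝ) ℂ) :
    SchwartzMap (ℝ × ℝ) ℂ :=
  SchwartzMap.compCLMOfContinuousLinearEquiv ℝ (hJ _ hl)
    (𝓕 (SchwartzMap.compCLMOfContinuousLinearEquiv ℝ Complex.equivRealProdCLM f))

lemma hSFS_apply (l : ℝ) (hl : l / (2 * Real.pi) ≠ 0) (f : SchwartzMap (ℝ × ℝ) ℂ) (v : ℝ × ℝ) :
    hSFS l hl f v = hSF l f v := by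
  unfold hSFS hSF
  rw [SchwartzMap.compCLMOfContinuousLinearEquiv_apply, Function.comp_apply,
    SchwartzMap.fourier_coe, Real.fourier_eq', ← Complex.volume_preserving_equiv_real_prod.integral_comp
      Complex.measurableEquivRealProd.measurableEmbedding]
  congr 1
  ext w
  have h1 : (SchwartzMap.compCLMOfContinuousLinearEquiv ℝ Complex.equivRealProdCLM f) w
    = f (w.re, w.im) := rfl
  have h2 : Complex.measurableEquivRealProd w = (w.re, w.im) := rfl
  rw [h1, h2, smul_eq_mul, mul_comm, hE]
  congr 3
  rw [real_inner_comm, Complex.inner, Complex.mul_re, Complex.conj_re, Complex.conj_im, hJ_re, hJ_im]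
  unfold hOm
  have := Real.pi_ne_zero
  congr 1
  field_simp
  ring

/-- `(m,v) ↦ (v, m+v)` -/
def hEq1 : ((ℝ × ℝ) × (ℝ × ℝ)) ≃L[ℝ] ((ℝ × ℝ) × (ℝ × ℝ)) :=
  ContinuousLinearEquiv.equivOfInverse
    ((ContinuousLinearMap.snd ℝ _ _).prod
      (ContinuousLinearMap.fst ℝ _ _ + ContinuousLinearMap.snd ℝ _ _))
    ((ContinuousLinearMap.snd ℝ (ℝ × ℝ) (ℝ × ℝ) - ContinuousLinearMap.fst ℝ (ℝ × ℝ) (ℝ × ℝ)).prod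
      (ContinuousLinearMap.fst ℝ _ _))
    (fun v => by ext <;> simp)
    (fun v => by ext <;> simp)

/-- `(w,u) ↦ (u, w-u)` -/
def hEq2 : ((ℝ × ℝ) × (ℝ × ℝ)) ≃L[ℝ] ((ℝ × ℝ) × (ℝ × ℝ)) :=
  ContinuousLinearEquiv.equivOfInverse
    ((ContinuousLinearMap.snd ℝ _ _).prod
      (ContinuousLinearMap.fst ℝ _ _ - ContinuousLinearMap.snd ℝ _ _))
    ((ContinuousLinearMap.snd ℝ (ℝ × ℝ) (ℝ × ℝ) + ContinuousLinearMap.fst ℝ (ℝ × ℝ) (ℝ × ℝ)).prod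
      (ContinuousLinearMap.fst ℝ _ _))
    (fun v => by ext <;> simp)
    (fun v => by ext <;> simp)

/-- twisted integrand as a Schwartz function -/
noncomputable def hPre (A g : SchwartzMap (ℝ × ℝ) ℂ) : SchwartzMap ((ℝ × ℝ) × (ℝ × ℝ)) ℂ :=
  SchwartzMap.compCLMOfContinuousLinearEquiv ℝ hEq1 (hTensor A g)

lemma hPre_apply (A g : SchwartzMap (ℝ × ℝ) ℂ) (m v : ℝ × ℝ) :
    hPre A g (m, v) = A v * g (m + v) := rfl

/-- twisted integrand as a Schwartz function, second version -/
noncomputable def hPre2 (A g : SchwartzMap (ℝ × ℝ) ℂ) : SchwartzMap ((ℝ × ℝ) × (ℝ × ℝ)) ℂ :=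
  SchwartzMap.compCLMOfContinuousLinearEquiv ℝ hEq2 (hTensor A g)

lemma hPre2_apply (A g : SchwartzMap (ℝ × ℝ) ℂ) (w u : ℝ × ℝ) :
    hPre2 A g (w, u) = A u * g (w - u) := rfl

lemma hOm_temperate : Function.HasTemperateGrowth
    (fun p : (ℝ × ℝ) × (ℝ × ℝ) => hOm p.1 p.2) := by
  have h11 : Function.HasTemperateGrowth (fun p : (ℝ × ℝ) × (ℝ × ℝ) => p.1.1) :=
    ((ContinuousLinearMap.fst ℝ ℝ ℝ).comp
      (ContinuousLinearMap.fst ℝ (ℝ × ℝ) (ℝ × ℝ))).hasTemperateGrowth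
  have h12 : Function.HasTemperateGrowth (fun p : (ℝ × ℝ) × (ℝ × ℝ) => p.1.2) :=
    ((ContinuousLinearMap.snd ℝ ℝ ℝ).comp
      (ContinuousLinearMap.fst ℝ (ℝ × ℝ) (ℝ × ℝ))).hasTemperateGrowth
  have h21 : Function.HasTemperateGrowth (fun p : (ℝ × ℝ) × (ℝ × ℝ) => p.2.1) :=
    ((ContinuousLinearMap.fst ℝ ℝ ℝ).comp
      (ContinuousLinearMap.snd ℝ (ℝ × ℝ) (ℝ × ℝ))).hasTemperateGrowth
  have h22 : Function.HasTemperateGrowth (fun p : (ℝ × ℝ) × (ℝ × ℝ) => p.2.2) :=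
    ((ContinuousLinearMap.snd ℝ ℝ ℝ).comp
      (ContinuousLinearMap.snd ℝ (ℝ × ℝ) (ℝ × ℝ))).hasTemperateGrowth
  exact (h11.mul h22).sub (h21.mul h12)

lemma hTwist_temperate (l : ℝ) : Function.HasTemperateGrowth
    (fun p : (ℝ × ℝ) × (ℝ × ℝ) => hE (l * hOm p.1 p.2)) :=
  hE_temperate.comp ((Function.HasTemperateGrowth.const l).mul hOm_temperate)

/-- the product, before normalization -/
noncomputable def hT (l : ℝ) (hl : l / (2 * Real.pi) ≠ 0) (f g : SchwartzMap (ℝ × ℝ) ℂ) :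
    SchwartzMap (ℝ × ℝ) ℂ :=
  partialInt volume (SchwartzMap.smulLeftCLM ℂ
    (fun p : (ℝ × ℝ) × (ℝ × ℝ) => hE ((-l) * hOm p.1 p.2)) (hPre (hSFS l hl f) g))

lemma hT_apply (l : ℝ) (hl : l / (2 * Real.pi) ≠ 0) (f g : SchwartzMap (ℝ × ℝ) ℂ) (m : ℝ × ℝ) :
    hT l hl f g m = ∫ v, hSFS l hl f v * g (m + v) * hE (-l * hOm m v) := by
  unfold hT
  rw [partialInt_apply]
  congr 1
  ext v
  rw [SchwartzMap.smulLeftCLM_apply_apply (hTwist_temperate _), hPre_apply, smul_eq_mul, mul_comm]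

lemma hOm_continuous : Continuous (fun p : (ℝ × ℝ) × (ℝ × ℝ) => hOm p.1 p.2) := by
  unfold hOm; fun_prop

lemma hInt_mul {X : Type} [TopologicalSpace X] [MeasurableSpace X] [BorelSpace X]
    [SecondCountableTopology X] {μ : Measure X} {G : X → ℂ} (hG : Integrable G μ)
    {k : X → ℝ} (hk : Continuous k) : Integrable (fun x => G x * hE (k x)) μ :=
  hG.mul_bdd (c := 1) (hE_continuous.comp hk).aestronglyMeasurable
    (ae_of_all _ fun x => (hE_norm _).le)

lemma hInt (G : SchwartzMap ((ℝ × ℝ) × (ℝ × ℝ)) ℂ) : Integrable (fun x => G x) volume := by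
  haveI : (volume : Measure ((ℝ × ℝ) × (ℝ × ℝ))).IsAddHaarMeasure :=
    inferInstanceAs (((volume : Measure (ℝ × ℝ)).prod
      (volume : Measure (ℝ × ℝ))).IsAddHaarMeasure)
  exact G.integrable

lemma heisKernel_eq (ℏ z : ℝ) (m a b : ℝ × ℝ) :
    heisKernel ℏ z m a b = hE ((z * ℏ)⁻¹ * hOm (a - m) (b - m)) := by
  unfold heisKernel hE hOm
  congr 1
  push_cast [Prod.fst_sub, Prod.snd_sub]
  rw [div_eq_mul_inv]
  ring

lemma hT_eq (ℏ z : ℝ) (hl : (z * ℏ)⁻¹ / (2 * Real.pi) ≠ 0) (f g : SchwartzMap (ℝ × ℝ) ℂ)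
    (m : ℝ × ℝ) :
    ∫ ab : (ℝ × ℝ) × (ℝ × ℝ), f ab.1 * g ab.2 * heisKernel ℏ z m ab.1 ab.2
      = hT (z * ℏ)⁻¹ hl f g m := by
  set l := (z * ℏ)⁻¹ with hldef
  simp_rw [heisKernel_eq, ← hldef]
  have hint : Integrable (fun ab : (ℝ × ℝ) × (ℝ × ℝ) =>
      f ab.1 * g ab.2 * hE (l * hOm (ab.1 - m) (ab.2 - m))) := by
    refine hInt_mul (G := fun ab : (ℝ × ℝ) × (ℝ × ℝ) => f ab.1 * g ab.2)
      (hInt (hTensor f g)) (k := fun ab => l * hOm (ab.1 - m) (ab.2 - m)) ?_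
    unfold hOm; fun_prop
  rw [Measure.volume_eq_prod] at hint ⊢
  rw [integral_prod_symm _ hint, hT_apply, ← integral_add_left_eq_self _ m]
  congr 1
  ext v
  rw [hSFS_apply, hSF, ← integral_mul_const, ← integral_mul_const]
  congr 1
  ext a
  simp only [add_sub_cancel_left]
  have : l * hOm (a - m) v = l * hOm a v + -l * hOm m v := by
    simp only [hOm, Prod.fst_sub, Prod.snd_sub]; ring
  rw [this, hE_add]
  ring

lemma hSFS_hT (l : ℝ) (hl : l / (2 * Real.pi) ≠ 0) (f g : SchwartzMap (ℝ × ℝ) ℂ) (w : ℝ × ℝ) :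
    hSFS l hl (hT l hl f g) w
      = ∫ u, hSFS l hl f u * hSFS l hl g (w - u) * hE (-l * hOm u w) := by
  rw [hSFS_apply, hSF]
  simp_rw [hT_apply, ← integral_mul_const]
  rw [integral_integral_swap]
  · congr 1
    ext u
    rw [hSFS_apply l hl g, hSF, ← integral_const_mul, ← integral_mul_const,
      ← integral_sub_right_eq_self _ u]
    congr 1
    ext a
    simp only [sub_add_cancel]
    have : hE (-l * hOm (a - u) u) * hE (l * hOm (a - u) w)
        = hE (l * hOm a (w - u)) * hE (-l * hOm u w) := by
      rw [← hE_add, ← hE_add]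
      congr 1
      simp only [hOm, Prod.fst_sub, Prod.snd_sub]; ring
    linear_combination (hSFS l hl f u * g a) * this
  · have h := hInt_mul (hInt_mul (hInt (hPre (hSFS l hl f) g))
      (k := fun p : (ℝ × ℝ) × (ℝ × ℝ) => -l * hOm p.1 p.2) (by unfold hOm; fun_prop))
      (k := fun p : (ℝ × ℝ) × (ℝ × ℝ) => l * hOm p.1 w) (by unfold hOm; fun_prop)
      (μ := volume)
    exact h

lemma hT_assoc (l : ℝ) (hl : l / (2 * Real.pi) ≠ 0) (f g h : SchwartzMap (ℝ × ℝ) ℂ) (m : ℝ × ℝ) :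
    hT l hl (hT l hl f g) h m = hT l hl f (hT l hl g h) m := by
  rw [hT_apply, hT_apply]
  simp_rw [hSFS_hT, hT_apply, ← integral_mul_const, ← integral_const_mul, ← integral_mul_const]
  rw [integral_integral_swap]
  · congr 1
    ext u
    rw [← integral_sub_right_eq_self (fun v => hSFS l hl f u * (hSFS l hl g v * h (m + u + v) *
      hE (-l * hOm (m + u) v)) * hE (-l * hOm m u)) u]
    congr 1
    ext w
    have e : m + u + (w - u) = m + w := by abel
    have : hE (-l * hOm u w) * hE (-l * hOm m w)
        = hE (-l * hOm (m + u) (w - u)) * hE (-l * hOm m u) := by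
      rw [← hE_add, ← hE_add]
      congr 1
      simp only [hOm, Prod.fst_sub, Prod.snd_sub, Prod.fst_add, Prod.snd_add]; ring
    rw [e]
    linear_combination (hSFS l hl f u * hSFS l hl g (w - u) * h (m + w)) * this
  · have h1 : Integrable (fun p : (ℝ × ℝ) × (ℝ × ℝ) =>
        hSFS l hl f p.2 * hSFS l hl g (p.1 - p.2) * hE (-l * hOm p.2 p.1)) :=
      hInt_mul (hInt (hPre2 (hSFS l hl f) (hSFS l hl g)))
        (k := fun p : (ℝ × ℝ) × (ℝ × ℝ) => -l * hOm p.2 p.1) (by unfold hOm; fun_prop)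
    have h2 : Integrable (fun p : (ℝ × ℝ) × (ℝ × ℝ) =>
        hSFS l hl f p.2 * hSFS l hl g (p.1 - p.2) * hE (-l * hOm p.2 p.1) * h (m + p.1)) := by
      refine h1.mul_bdd (c := SchwartzMap.seminorm ℝ 0 0 h)
        (h.continuous.comp (by fun_prop : Continuous fun p : (ℝ × ℝ) × (ℝ × ℝ) => m + p.1)
          ).aestronglyMeasurable (ae_of_all _ fun p => h.norm_le_seminorm ℝ _)
    exact hInt_mul h2 (k := fun p : (ℝ × ℝ) × (ℝ × ℝ) => -l * hOm m p.1)
      (by unfold hOm; fun_prop)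

end heis

/-- For every  and fixed , the leafwise Heisenberg-dual product maps pairs of
Schwartz functions to Schwartz functions and is associative. -/
theorem heisProd_schwartz_and_assoc (ℏ : ℝ) (hℏ : 0 < ℏ) (z : ℝ) (hz : z ≠ 0) :
    (∀ f g : SchwartzMap (ℝ × ℝ) ℂ,
      ∃ F : SchwartzMap (ℝ × ℝ) ℂ, ⇑F = heisProd ℏ z (⇑f) (⇑g)) ∧
    (∀ f g h : SchwartzMap (ℝ × ℝ) ℂ,
      heisProd ℏ z (heisProd ℏ z (⇑f) (⇑g)) (⇑h)
        = heisProd ℏ z (⇑f) (heisProd ℏ z (⇑g) (⇑h))) := by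
  have hl : (z * ℏ)⁻¹ / (2 * Real.pi) ≠ 0 := by
    have := Real.pi_ne_zero
    have := hℏ.ne'
    positivity
  have key : ∀ f g : SchwartzMap (ℝ × ℝ) ℂ, heisProd ℏ z f g
      = ⇑(((2 * Real.pi * z * ℏ) ^ 2 : ℝ)⁻¹ • hT (z * ℏ)⁻¹ hl f g) := by
    intro f g
    ext m
    rw [heisProd, hT_eq ℏ z hl]
    rfl
  refine ⟨fun f g => ⟨_, (key f g).symm⟩, fun f g h => ?_⟩
  rw [key f g, key g h, key, key]
  ext m
  have s1 : ∀ (c : ℝ) (f g : SchwartzMap (ℝ × ℝ) ℂ),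
      hT (z * ℏ)⁻¹ hl (c • f) g m = c • hT (z * ℏ)⁻¹ hl f g m := by
    intro c f g
    simp only [hT_apply, hSFS_apply, hSF, smul_apply, smul_mul_assoc, integral_smul]
  have s2 : ∀ (c : ℝ) (f g : SchwartzMap (ℝ × ℝ) ℂ),
      hT (z * ℏ)⁻¹ hl f (c • g) m = c • hT (z * ℏ)⁻¹ hl f g m := by
    intro c f g
    simp only [hT_apply, smul_apply, mul_smul_comm, smul_mul_assoc, integral_smul]
  rw [smul_apply, smul_apply, s1, s2, hT_assoc]
end

section
/- For every fixed real z ≠ 0, all Schwartz functions f, g : ℝ² → ℂ, and every point (x,y) ∈ ℝ², the commutator semiclassical asymptotics of the leafwise Heisenberg-dual product hold: lim_{ℏ → 0⁺} [ (f ⋆_{ℏ,z} g)(x,y) − (g ⋆_{ℏ,z} f)(x,y) ] / ℏ = 2iz·{f,g}(x,y). -/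
open MeasureTheory Complex Filter

open scoped FourierTransform SchwartzMap LineDeriv

noncomputable def pullC (m : ℝ × ℝ) (f : 𝓢(ℝ × ℝ, ℂ)) : 𝓢(ℂ, ℂ) :=
  SchwartzMap.compCLMOfContinuousLinearEquiv ℂ Complex.equivRealProdCLM
    (SchwartzMap.compSubConstCLM ℂ (-m) f)

lemma pullC_apply (m : ℝ × ℝ) (f : 𝓢(ℝ × ℝ, ℂ)) (v : ℂ) :
    pullC m f v = f (m + (v.re, v.im)) := by
  simp [pullC, add_comm]

lemma fderiv_pullC (m : ℝ × ℝ) (f : 𝓢(ℝ × ℝ, ℂ)) (w : ℂ) :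
    fderiv ℝ (pullC m f) 0 w = w.re * pderivX f m + w.im * pderivY f m := by
  have h0 : HasFDerivAt (fun v : ℂ => m + Complex.equivRealProdCLM v)
      (Complex.equivRealProdCLM : ℂ →L[ℝ] ℝ × ℝ) 0 :=
    (Complex.equivRealProdCLM.hasFDerivAt).const_add m
  have h1 : HasFDerivAt f (fderiv ℝ f m) (m + Complex.equivRealProdCLM 0) := by
    rw [map_zero, add_zero]
    exact (f.differentiable m).hasFDerivAt
  have h2 := h1.comp (0 : ℂ) h0
  have h3 : (f ∘ fun v : ℂ => m + Complex.equivRealProdCLM v) = pullC m f := by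
    funext v
    rw [pullC_apply]; rfl
  rw [h3] at h2
  rw [h2.fderiv]
  have h4 : (w.re, w.im) = w.re • ((1 : ℝ), (0 : ℝ)) + w.im • ((0 : ℝ), (1 : ℝ)) := by simp
  change fderiv ℝ f m (w.re, w.im) = _
  rw [h4, map_add, map_smul, map_smul]
  simp [pderivX, pderivY]

lemma integral_fourier_zero (h : 𝓢(ℂ, ℂ)) : ∫ w, 𝓕 h w = h 0 := by
  have h1 : 𝓕⁻ (𝓕 h) = h := FourierTransform.fourierInv_fourier_eq h
  have h2 : (𝓕⁻ (𝓕 h) : 𝓢(ℂ, ℂ)) 0 = h 0 := by rw [h1]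
  rw [← h2, SchwartzMap.fourierInv_coe, Real.fourierInv_eq']
  simp

lemma fourier_lineDeriv_apply (h : 𝓢(ℂ, ℂ)) (u w : ℂ) :
    𝓕 (∂_{u} h) w = 2 * Real.pi * I * ((inner ℝ w u : ℝ) : ℂ) * 𝓕 h w := by
  rw [SchwartzMap.fourier_lineDerivOp_eq]
  rw [smul_apply, SchwartzMap.smulLeftCLM_apply_apply (by fun_prop)]
  simp [mul_assoc]

lemma integral_moment (h : 𝓢(ℂ, ℂ)) (u : ℂ) :
    ∫ w, ((inner ℝ w u : ℝ) : ℂ) * 𝓕 h w = fderiv ℝ h 0 u / (2 * Real.pi * I) := by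
  have h1 := integral_fourier_zero (∂_{u} h)
  rw [SchwartzMap.lineDerivOp_apply_eq_fderiv] at h1
  have hp : (2 * Real.pi * I : ℂ) ≠ 0 := by simp [Real.pi_ne_zero]
  rw [eq_div_iff hp, ← h1, mul_comm, ← integral_const_mul]
  congr 1; funext w
  rw [fourier_lineDeriv_apply]; ring

lemma integral_pull (m : ℝ × ℝ) (F : ℝ × ℝ → ℂ) :
    ∫ a, F a = ∫ v : ℂ, F (m + (v.re, v.im)) := by
  rw [← integral_add_left_eq_self F m]
  exact (Complex.volume_preserving_equiv_real_prod.integral_comp'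
    (fun a => F (m + a))).symm

lemma integral_rot (F : ℂ → ℂ) (r : ℝ) (hr : r ≠ 0) :
    ∫ v, F v = (r ^ 2 : ℝ) • ∫ w : ℂ, F (r • (I * w)) := by
  have h1 : ∫ v, F v = ∫ v, F (I * v) := by
    have := (rotation (⟨I, by simp [Submonoid.unitSphere]⟩ : Circle)).measurePreserving.integral_comp
      (rotation _).toHomeomorph.measurableEmbedding F
    rw [← this]; rfl
  have h2 := Measure.integral_comp_smul (volume : Measure ℂ) (fun v => F (I * v)) r
  have h3 : ∀ w : ℂ, I * (r • w) = r • (I * w) := fun w => by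
    simp only [Complex.real_smul]; ring
  simp only [h3] at h2
  rw [h2, Complex.finrank_real_complex, abs_of_pos (by positivity), smul_smul,
    mul_inv_cancel₀ (by positivity), one_smul, h1]

lemma heisKernel_norm (ℏ z : ℝ) (m a b : ℝ × ℝ) : ‖heisKernel ℏ z m a b‖ = 1 := by
  have : heisKernel ℏ z m a b = Complex.exp ((((z * ℏ)⁻¹ *
      ((a.1 - m.1) * (b.2 - m.2) - (b.1 - m.1) * (a.2 - m.2)) : ℝ) : ℂ) * I) := by
    unfold heisKernel
    congr 1
    push_cast
    ring
  rw [this, Complex.norm_exp_ofReal_mul_I]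

lemma heisProd_eq (z ℏ : ℝ) (hz : z ≠ 0) (hh : ℏ ≠ 0) (f g : 𝓢(ℝ × ℝ, ℂ)) (m : ℝ × ℝ) :
    heisProd ℏ z f g m
      = ∫ w : ℂ, pullC m f (ℏ • ((2 * Real.pi * z) • (I * w))) * 𝓕 (pullC m g) w := by
  have hint : Integrable (fun ab : (ℝ × ℝ) × (ℝ × ℝ) =>
      f ab.1 * g ab.2 * heisKernel ℏ z m ab.1 ab.2) (volume.prod volume) := by
    have h := (f.integrable (μ := volume)).mul_prod (g.integrable (μ := volume))
    refine h.mul_bdd (c := 1) ?_ (Eventually.of_forall fun x => (heisKernel_norm _ _ _ _ _).le)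
    apply Continuous.aestronglyMeasurable
    unfold heisKernel
    fun_prop
  have hr : 2 * Real.pi * z * ℏ ≠ 0 := by
    have := Real.pi_ne_zero
    positivity
  unfold heisProd
  rw [Measure.volume_eq_prod, integral_prod _ hint, integral_pull m, integral_rot _ _ hr, smul_smul,
    inv_mul_cancel₀ (by positivity), one_smul]
  congr 1; funext w
  simp only [mul_assoc]
  rw [integral_const_mul, integral_pull m, pullC_apply, SchwartzMap.fourier_coe, Real.fourier_eq']
  congr 1
  · congr 2
    simp; constructor <;> ring
  · congr 1; funext v
    rw [pullC_apply, smul_eq_mul, mul_comm]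
    congr 1
    unfold heisKernel
    congr 1
    have h1 : (z : ℂ) ≠ 0 := by exact_mod_cast hz
    have h2 : (ℏ : ℂ) ≠ 0 := by exact_mod_cast hh
    simp [Complex.inner]
    field_simp
    ring

lemma deriv_aux (c : ℝ) (k h : 𝓢(ℂ, ℂ)) :
    HasDerivAt (fun ℏ : ℝ => ∫ w : ℂ, k (ℏ • (c • (I * w))) * 𝓕 h w)
      (∫ w : ℂ, fderiv ℝ k 0 (c • (I * w)) * 𝓕 h w) 0 := by
  obtain ⟨C, hC⟩ : ∃ C, ∀ x, ‖fderiv ℝ k x‖ ≤ C :=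
    ⟨_, fun x => by
      simpa using SchwartzMap.norm_le_seminorm ℝ (SchwartzMap.fderivCLM ℝ ℂ ℂ k) x⟩
  have hk : Continuous (fderiv ℝ k) := (k.smooth 1).continuous_fderiv (by simp)
  have hkc := k.continuous
  have hhc := (𝓕 h).continuous
  have key := hasDerivAt_integral_of_dominated_loc_of_deriv_le (μ := (volume : Measure ℂ))
    (s := Set.univ) (x₀ := (0 : ℝ)) (F := fun ℏ w => k (ℏ • (c • (I * w))) * 𝓕 h w)
    (F' := fun ℏ w => fderiv ℝ k (ℏ • (c • (I * w))) (c • (I * w)) * 𝓕 h w)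
    (bound := fun w => C * |c| * (‖w‖ ^ 1 * ‖𝓕 h w‖))
    Filter.univ_mem ?_ ?_ ?_ ?_ ?_ ?_
  · simpa using key.2
  · exact Eventually.of_forall fun ℏ => by
      apply Continuous.aestronglyMeasurable; fun_prop
  · simpa using ((𝓕 h).integrable (μ := volume)).const_mul (k 0)
  · apply Continuous.aestronglyMeasurable
    fun_prop
  · refine Eventually.of_forall fun w ℏ _ => ?_
    rw [norm_mul]
    have h1 := (fderiv ℝ k (ℏ • (c • (I * w)))).le_of_opNorm_le (hC _) (c • (I * w))
    have h2 : ‖c • (I * w)‖ = |c| * ‖w‖ := by simp [norm_smul]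
    rw [h2] at h1
    calc _ ≤ C * (|c| * ‖w‖) * ‖𝓕 h w‖ := by gcongr
      _ = _ := by ring
  · exact ((𝓕 h).integrable_pow_mul volume 1).const_mul _
  · refine Eventually.of_forall fun w ℏ _ => ?_
    have h1 : HasDerivAt (fun t : ℝ => t • (c • (I * w))) ((1 : ℝ) • (c • (I * w))) ℏ :=
      (hasDerivAt_id ℏ).smul_const _
    rw [one_smul] at h1
    exact ((k.differentiable _).hasFDerivAt.comp_hasDerivAt ℏ h1).mul_const _

lemma deriv_value (z : ℝ) (f g : 𝓢(ℝ × ℝ, ℂ)) (m : ℝ × ℝ) :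
    ∫ w : ℂ, fderiv ℝ (pullC m f) 0 ((2 * Real.pi * z) • (I * w)) * 𝓕 (pullC m g) w
      = I * z * pbracket f g m := by
  have hi : ∀ u : ℂ, Integrable (fun w : ℂ => ((inner ℝ w u : ℝ) : ℂ) * 𝓕 (pullC m g) w) := by
    intro u
    refine (((𝓕 (pullC m g)).integrable_pow_mul volume 1).const_mul ‖u‖).mono' ?_ ?_
    · have := (𝓕 (pullC m g)).continuous
      apply Continuous.aestronglyMeasurable
      fun_prop
    · refine Eventually.of_forall fun w => ?_
      rw [norm_mul, Complex.norm_real]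
      have := norm_inner_le_norm (𝕜 := ℝ) w u
      calc _ ≤ (‖w‖ * ‖u‖) * ‖𝓕 (pullC m g) w‖ := by gcongr
        _ = _ := by ring
  have e : ∀ w : ℂ, fderiv ℝ (pullC m f) 0 ((2 * Real.pi * z) • (I * w)) * 𝓕 (pullC m g) w
      = (2 * Real.pi * z * pderivY f m) * (((inner ℝ w (1 : ℂ) : ℝ) : ℂ) * 𝓕 (pullC m g) w)
      - (2 * Real.pi * z * pderivX f m) * (((inner ℝ w I : ℝ) : ℂ) * 𝓕 (pullC m g) w) := by
    intro w
    rw [fderiv_pullC]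
    simp [Complex.inner]
    ring
  simp only [e]
  rw [integral_sub ((hi 1).const_mul _) ((hi I).const_mul _), integral_const_mul,
    integral_const_mul, integral_moment, integral_moment, fderiv_pullC, fderiv_pullC]
  have hp : (Real.pi : ℂ) ≠ 0 := by exact_mod_cast Real.pi_ne_zero
  simp only [pbracket, one_re, one_im, I_re, I_im, ofReal_one, ofReal_zero]
  field_simp
  rw [I_sq]
  ring

lemma heisProd_first_order (z : ℝ) (hz : z ≠ 0) (f g : 𝓢(ℝ × ℝ, ℂ)) (m : ℝ × ℝ) :
    Tendsto (fun ℏ : ℝ => (heisProd ℏ z f g m - f m * g m) / (ℏ : ℂ))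
      (nhdsWithin 0 (Set.Ioi 0)) (nhds (I * z * pbracket f g m)) := by
  have h := deriv_aux (2 * Real.pi * z) (pullC m f) (pullC m g)
  rw [deriv_value, hasDerivAt_iff_tendsto_slope] at h
  have h2 := h.mono_left (nhdsWithin_mono (0 : ℝ)
    (show Set.Ioi (0 : ℝ) ⊆ {0}ᶜ from fun x hx => ne_of_gt hx))
  refine h2.congr' ?_
  filter_upwards [self_mem_nhdsWithin] with ℏ hℏ
  have hne : ℏ ≠ 0 := ne_of_gt hℏ
  rw [heisProd_eq z ℏ hz hne, slope_def_module]
  simp only [zero_smul, sub_zero]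
  rw [integral_const_mul, integral_fourier_zero, pullC_apply, pullC_apply]
  have hm : m + ((0 : ℂ).re, (0 : ℂ).im) = m := by simp
  rw [hm, Complex.real_smul, ofReal_inv, div_eq_inv_mul]

/-- Commutator semiclassical asymptotics of the leafwise Heisenberg-dual product:
`lim_{ℏ → 0⁺} [(f ⋆_{ℏ,z} g)(x,y) − (g ⋆_{ℏ,z} f)(x,y)]/ℏ = 2iz·{f,g}(x,y)`. -/
theorem heisProd_commutator (z : ℝ) (hz : z ≠ 0) (f g : SchwartzMap (ℝ × ℝ) ℂ) (m : ℝ × ℝ) :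
    Tendsto (fun ℏ : ℝ => (heisProd ℏ z (⇑f) (⇑g) m - heisProd ℏ z (⇑g) (⇑f) m) / (ℏ : ℂ))
      (nhdsWithin 0 (Set.Ioi 0))
      (nhds (2 * Complex.I * (z : ℂ) * pbracket (⇑f) (⇑g) m)) := by
  have h := (heisProd_first_order z hz f g m).sub (heisProd_first_order z hz g f m)
  have e : I * z * pbracket f g m - I * z * pbracket g f m
      = 2 * Complex.I * (z : ℂ) * pbracket f g m := by
    simp only [pbracket]; ring
  rw [e] at h
  refine h.congr fun ℏ => ?_
  ring
end
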